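/- arXiv:2103.09387 — 3 statements merged into one kernel-verified Lean document; each statement's English description precedes it below -/
import Mathlib

section
/- Let d ≥ 2, p ≥ 1, s ∈ (0,1] with sp > 1, M ∈ (0, ∞], and 0 < ϑ ≤ 1. Let [u]_n^p = ∫_{ℝ^{d-1}} ∫₀^M ⨏_{a x_d}^{b x_d} |u(x', y_d) - u(x', x_d)|^p / (ϑ x_d)^{ps} dy_d dx_d dx' and [u]_t^p = ∫_{ℝ^{d-1}} ∫₀^M ⨏_{B(x', κ x_d)} |u(y', x_d) - u(x', x_d)|^p / (ϑ x_d)^{ps} dy' dx_d dx'. Then there exist constants C, a, b, κ with 0 ≤ a < b ≤ 1, 0 < κ < 1, (a-1)² + κ² ≤ ϑ², such that [u]_n ≤ C |u|_{𝔚^{s,p}_ϑ(ℝ^d_{M+})} and [u]_t ≤ C |u|_{𝔚^{s,p}_ϑ(ℝ^d_{M+})} for all u ∈ 𝔚^{s,p}_ϑ(ℝ^d_{M+}). -/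
open MeasureTheory
open scoped ENNReal NNReal

/-- The localized nonlocal seminorm (to the `p`-th power) on the stripe
`ℝ^{d-1} × (0,M]` (with `M = ∞` allowed, giving the half space), with horizon
parameter `τ`, written with points `(x', x_d)` and the Euclidean distance
condition `dist(y',x')² + (y_d - x_d)² < (τ x_d)²`. -/
noncomputable def stripeSemi (d : ℕ) (S : Set ℝ) (τ p s : ℝ)
    (u : EuclideanSpace ℝ (Fin (d - 1)) → ℝ → ℝ) : ℝ≥0∞ :=
  ∫⁻ x' : EuclideanSpace ℝ (Fin (d - 1)), ∫⁻ xd in S,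
    ∫⁻ y' : EuclideanSpace ℝ (Fin (d - 1)),
      ∫⁻ yd in S ∩ {t : ℝ | dist y' x' ^ 2 + (t - xd) ^ 2 < (τ * xd) ^ 2},
        ENNReal.ofReal (|u y' yd - u x' xd| ^ p / (τ * xd) ^ ((d : ℝ) + p * s))

/-- Normal directional nonlocal seminorm (to the `p`-th power) on the stripe. -/
noncomputable def stripeNormalSemi (d : ℕ) (S : Set ℝ) (ϑ a b p s : ℝ)
    (u : EuclideanSpace ℝ (Fin (d - 1)) → ℝ → ℝ) : ℝ≥0∞ :=
  ∫⁻ x' : EuclideanSpace ℝ (Fin (d - 1)), ∫⁻ xd in S,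
    (ENNReal.ofReal ((b - a) * xd))⁻¹ *
      ∫⁻ yd in Set.Ioc (a * xd) (b * xd),
        ENNReal.ofReal (|u x' yd - u x' xd| ^ p / (ϑ * xd) ^ (p * s))

/-- Tangential directional nonlocal seminorm (to the `p`-th power) on the stripe. -/
noncomputable def stripeTangentSemi (d : ℕ) (S : Set ℝ) (ϑ κ p s : ℝ)
    (u : EuclideanSpace ℝ (Fin (d - 1)) → ℝ → ℝ) : ℝ≥0∞ :=
  ∫⁻ x' : EuclideanSpace ℝ (Fin (d - 1)), ∫⁻ xd in S,
    (volume (Metric.ball x' (κ * xd)))⁻¹ *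
      ∫⁻ y' in Metric.ball x' (κ * xd),
        ENNReal.ofReal (|u y' xd - u x' xd| ^ p / (ϑ * xd) ^ (p * s))

/-!
For nearby `x` and `y`, averaging `|u(x) - u(y)|^p ≲ |u(z) - u(x)|^p + |u(z) - u(y)|^p` over `z` in
a box of size `δ x_d` contained in both `B(x, ϑ x_d)` and `B(y, ϑ y_d)` bounds the normalized
increment by `F(x) + F(y)`, where `F` is the inner integral of the localized seminorm. The two
directional seminorms average this bound over `y` in `{x'} × (a x_d, x_d]` and in
`B(x', κ x_d) × {x_d}`. By Tonelli, both averages are bounded on `L¹`: the ball has constant volume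
at a fixed height, and `∫ 1_{a t < r ≤ t} dt / ((1 - a) t) ≤ 1 / a`.
-/

section Averages

variable {α β : Type*} [MeasurableSpace α] [MeasurableSpace β] {μ : Measure α} {ν : Measure β}
  {A : α → Set β}

theorem measurable_setLIntegral_section [SFinite ν]
    (hA : MeasurableSet {z : α × β | z.2 ∈ A z.1}) {f : α × β → ℝ≥0∞} (hf : Measurable f) :
    Measurable fun x => ∫⁻ y in A x, f (x, y) ∂ν := by
  have hAx (x : α) : MeasurableSet (A x) := measurable_prodMk_left hA
  simp only [← lintegral_indicator (hAx _)]
  exact (hf.indicator hA).lintegral_prod_right'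

theorem measurable_setLAverage_section [SFinite ν]
    (hA : MeasurableSet {z : α × β | z.2 ∈ A z.1}) {f : α × β → ℝ≥0∞} (hf : Measurable f) :
    Measurable fun x => ⨍⁻ y in A x, f (x, y) ∂ν := by
  simp only [setLAverage_eq]
  exact (measurable_setLIntegral_section hA hf).div (measurable_measure_prodMk_left hA)

theorem lintegral_setLAverage_eq [SFinite μ] [SFinite ν]
    (hA : MeasurableSet {z : α × β | z.2 ∈ A z.1}) {f : β → ℝ≥0∞} (hf : Measurable f) :
    ∫⁻ x, ⨍⁻ y in A x, f y ∂ν ∂μ =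
      ∫⁻ y, (∫⁻ x in {x | y ∈ A x}, (ν (A x))⁻¹ ∂μ) * f y ∂ν := by
  have hAx (x : α) : MeasurableSet (A x) := measurable_prodMk_left hA
  have hAy (y : β) : MeasurableSet {x | y ∈ A x} := measurable_prodMk_right hA
  have hν : Measurable fun x => (ν (A x))⁻¹ := (measurable_measure_prodMk_left hA).inv
  let g : α × β → ℝ≥0∞ :=
    {z : α × β | z.2 ∈ A z.1}.indicator fun z => (ν (A z.1))⁻¹ * f z.2
  have hg : Measurable g :=
    ((hν.comp measurable_fst).mul (hf.comp measurable_snd)).indicator hA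
  calc ∫⁻ x, ⨍⁻ y in A x, f y ∂ν ∂μ = ∫⁻ x, ∫⁻ y, g (x, y) ∂ν ∂μ := by
        refine lintegral_congr fun x => ?_
        rw [setLAverage_eq, ENNReal.div_eq_inv_mul, ← lintegral_const_mul _ hf,
          ← lintegral_indicator (hAx x)]
        rfl
    _ = ∫⁻ y, ∫⁻ x, g (x, y) ∂μ ∂ν := lintegral_lintegral_swap hg.aemeasurable
    _ = _ := by
        refine lintegral_congr fun y => ?_
        rw [← lintegral_mul_const _ hν, ← lintegral_indicator (hAy y)]
        rfl

theorem setLAverage_le_mul_add {B : Set β} (hB : MeasurableSet B) (hB₀ : ν B ≠ 0)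
    (hB_top : ν B ≠ ∞) {w f : β → ℝ≥0∞} {K c : ℝ≥0∞} (hK : K ≠ ∞)
    (hw : ∀ y ∈ B, w y ≤ K * (c + f y)) :
    ⨍⁻ y in B, w y ∂ν ≤ K * (c + ⨍⁻ y in B, f y ∂ν) := by
  calc ⨍⁻ y in B, w y ∂ν ≤ (∫⁻ y in B, K * (c + f y) ∂ν) / ν B := by
        rw [setLAverage_eq]
        gcongr ?_ / _
        exact setLIntegral_mono' hB hw
    _ = K * (c + ⨍⁻ y in B, f y ∂ν) := by
        rw [lintegral_const_mul' _ _ hK, lintegral_add_left measurable_const, setLIntegral_const,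
          mul_div_assoc, ENNReal.add_div, ENNReal.mul_div_cancel_right hB₀ hB_top, setLAverage_eq]

theorem lintegral_setLAverage_le_mul_add (hA : ∀ x, MeasurableSet (A x))
    (hA₀ : ∀ᵐ x ∂μ, ν (A x) ≠ 0) (hA_top : ∀ᵐ x ∂μ, ν (A x) ≠ ∞) {w g : α → β → ℝ≥0∞}
    {f : α → ℝ≥0∞} (hf : Measurable f) {K : ℝ≥0∞} (hK : K ≠ ∞)
    (hw : ∀ᵐ x ∂μ, ∀ y ∈ A x, w x y ≤ K * (f x + g x y)) :
    ∫⁻ x, ⨍⁻ y in A x, w x y ∂ν ∂μ ≤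
      K * (∫⁻ x, f x ∂μ + ∫⁻ x, ⨍⁻ y in A x, g x y ∂ν ∂μ) := by
  rw [← lintegral_add_left hf, ← lintegral_const_mul' _ _ hK]
  refine lintegral_mono_ae ?_
  filter_upwards [hA₀, hA_top, hw] with x hx₀ hx_top hwx
  exact setLAverage_le_mul_add (hA x) hx₀ hx_top hK hwx

theorem measurableSet_snd_mem_Ioc {f g : α → ℝ} (hf : Measurable f) (hg : Measurable g) :
    MeasurableSet {z : α × ℝ | z.2 ∈ Set.Ioc (f z.1) (g z.1)} :=
  (measurableSet_lt (hf.comp measurable_fst) measurable_snd).inter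
    (measurableSet_le measurable_snd (hg.comp measurable_fst))

theorem measurableSet_snd_mem_ball [PseudoMetricSpace β] [SecondCountableTopology β]
    [OpensMeasurableSpace β] {c : α → β} {r : α → ℝ} (hc : Measurable c) (hr : Measurable r) :
    MeasurableSet {z : α × β | z.2 ∈ Metric.ball (c z.1) (r z.1)} :=
  measurableSet_lt (measurable_snd.dist (hc.comp measurable_fst)) (hr.comp measurable_fst)

theorem ae_snd_mem_prod_restrict {S : Set β} (hS : MeasurableSet S) :
    ∀ᵐ x ∂μ.prod (ν.restrict S), x.2 ∈ S :=
  Measure.quasiMeasurePreserving_snd.ae (ae_restrict_mem hS)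

end Averages

theorem lintegral_setLAverage_ball {E : Type*} [NormedAddCommGroup E] [ProperSpace E]
    [MeasurableSpace E] [BorelSpace E] (μ : Measure E) [μ.IsAddHaarMeasure] {r : ℝ} (hr : 0 < r)
    {f : E → ℝ≥0∞} (hf : Measurable f) :
    ∫⁻ x, ⨍⁻ y in Metric.ball x r, f y ∂μ ∂μ = ∫⁻ y, f y ∂μ := by
  have hball : MeasurableSet {z : E × E | z.2 ∈ Metric.ball z.1 r} :=
    measurableSet_snd_mem_ball measurable_id measurable_const
  rw [lintegral_setLAverage_eq hball hf]
  refine lintegral_congr fun y => ?_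
  have hsymm : {x | y ∈ Metric.ball x r} = Metric.ball y r :=
    Set.ext fun x => Metric.mem_ball_comm
  simp only [hsymm, Measure.addHaar_ball_center μ _ r]
  rw [setLIntegral_const, Measure.addHaar_ball_center μ y r,
    ENNReal.inv_mul_cancel (Metric.measure_ball_pos μ _ hr).ne' measure_ball_lt_top.ne, one_mul]

/-- The ranges of heights of a stripe: initial segments of the positive half-line, that is, `∅`,
`(0, M)`, `(0, M]` or `(0, ∞)`. -/
structure IsHeightRange (S : Set ℝ) : Prop where
  pos : ∀ t ∈ S, 0 < t
  mem_of_le : ∀ t ∈ S, ∀ r, 0 < r → r ≤ t → r ∈ S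

theorem IsHeightRange.measurableSet {S : Set ℝ} (hS : IsHeightRange S) : MeasurableSet S :=
  Set.OrdConnected.measurableSet
    ⟨fun x hx y hy t ht => hS.mem_of_le y hy t ((hS.pos x hx).trans_le ht.1) ht.2⟩

theorem isHeightRange_ofReal_le (M : ℝ≥0∞) :
    IsHeightRange {t : ℝ | 0 < t ∧ ENNReal.ofReal t ≤ M} where
  pos _ ht := ht.1
  mem_of_le _ ht _ hr hrt := ⟨hr, (ENNReal.ofReal_le_ofReal hrt).trans ht.2⟩

theorem setLIntegral_setLAverage_Ioc_le {S : Set ℝ} (hS : IsHeightRange S) {a : ℝ} (ha₀ : 0 < a)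
    (ha₁ : a < 1) {f : ℝ → ℝ≥0∞} (hf : Measurable f) :
    ∫⁻ t in S, (⨍⁻ r in Set.Ioc (a * t) t, f r ∂volume) ≤ ENNReal.ofReal a⁻¹ * ∫⁻ r in S, f r := by
  have hIoc : MeasurableSet {z : ℝ × ℝ | z.2 ∈ Set.Ioc (a * z.1) z.1} :=
    measurableSet_snd_mem_Ioc (measurable_id.const_mul a) measurable_id
  rw [lintegral_setLAverage_eq hIoc hf, ← lintegral_const_mul _ hf,
    ← lintegral_indicator hS.measurableSet]
  refine lintegral_mono fun r => ?_
  have hmeas : MeasurableSet {t : ℝ | r ∈ Set.Ioc (a * t) t} := measurable_prodMk_right hIoc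
  rw [Measure.restrict_restrict hmeas]
  by_cases hr : r ∈ S
  · have hr₀ := hS.pos r hr
    have ha : 0 < 1 - a := sub_pos.2 ha₁
    rw [Set.indicator_of_mem hr]
    gcongr
    calc ∫⁻ t in {t | r ∈ Set.Ioc (a * t) t} ∩ S, (volume (Set.Ioc (a * t) t))⁻¹
        ≤ ∫⁻ t in {t | r ∈ Set.Ioc (a * t) t} ∩ S, (ENNReal.ofReal ((1 - a) * r))⁻¹ := by
          refine setLIntegral_mono' (hmeas.inter hS.measurableSet) fun t ht => ?_
          rw [Real.volume_Ioc, show t - a * t = (1 - a) * t by ring]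
          gcongr
          exact ht.1.2
      _ ≤ ∫⁻ t in Set.Icc r (r / a), (ENNReal.ofReal ((1 - a) * r))⁻¹ :=
          lintegral_mono_set fun t ht => ⟨ht.1.2, (le_div_iff₀' ha₀).2 ht.1.1.le⟩
      _ = ENNReal.ofReal a⁻¹ := by
          rw [setLIntegral_const, Real.volume_Icc, ← ENNReal.ofReal_inv_of_pos (by positivity),
            ← ENNReal.ofReal_mul (by positivity)]
          congr 1
          field_simp
  · have hempty : {t | r ∈ Set.Ioc (a * t) t} ∩ S = ∅ :=
      Set.eq_empty_of_forall_notMem fun t ht => hr <|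
        hS.mem_of_le t ht.2 r ((mul_pos ha₀ (hS.pos t ht.2)).trans ht.1.1) ht.1.2
    rw [hempty, Measure.restrict_empty, lintegral_zero_measure, zero_mul]
    exact zero_le

theorem lintegral_normalAverage_le {E : Type*} [MeasurableSpace E] (μ : Measure E) {S : Set ℝ}
    (hS : IsHeightRange S) {a : ℝ} (ha₀ : 0 < a) (ha₁ : a < 1) {f : E × ℝ → ℝ≥0∞}
    (hf : Measurable f) :
    ∫⁻ x, ⨍⁻ r in Set.Ioc (a * x.2) x.2, f (x.1, r) ∂volume ∂μ.prod (volume.restrict S) ≤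
      ENNReal.ofReal a⁻¹ * ∫⁻ x, f x ∂μ.prod (volume.restrict S) := by
  have hmeas := measurable_setLAverage_section (ν := volume)
    (A := fun x : E × ℝ => Set.Ioc (a * x.2) x.2)
    (measurableSet_snd_mem_Ioc (measurable_snd.const_mul a) measurable_snd)
    (f := fun z => f (z.1.1, z.2)) (by fun_prop)
  rw [lintegral_prod _ hmeas.aemeasurable, lintegral_prod _ hf.aemeasurable,
    ← lintegral_const_mul' _ _ ENNReal.ofReal_ne_top]
  exact lintegral_mono fun x' =>
    setLIntegral_setLAverage_Ioc_le hS ha₀ ha₁ (hf.comp measurable_prodMk_left)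

theorem lintegral_tangentAverage_eq {E : Type*} [NormedAddCommGroup E] [ProperSpace E]
    [MeasurableSpace E] [BorelSpace E] (μ : Measure E) [μ.IsAddHaarMeasure] {S : Set ℝ}
    (hS : IsHeightRange S) {κ : ℝ} (hκ : 0 < κ) {f : E × ℝ → ℝ≥0∞} (hf : Measurable f) :
    ∫⁻ x, ⨍⁻ y' in Metric.ball x.1 (κ * x.2), f (y', x.2) ∂μ ∂μ.prod (volume.restrict S) =
      ∫⁻ x, f x ∂μ.prod (volume.restrict S) := by
  have hmeas := measurable_setLAverage_section (ν := μ)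
    (A := fun x : E × ℝ => Metric.ball x.1 (κ * x.2))
    (measurableSet_snd_mem_ball measurable_fst (measurable_snd.const_mul κ))
    (f := fun z => f (z.2, z.1.2)) (by fun_prop)
  rw [lintegral_prod_symm _ hmeas.aemeasurable, lintegral_prod_symm _ hf.aemeasurable]
  refine setLIntegral_congr_fun hS.measurableSet fun t ht => ?_
  exact lintegral_setLAverage_ball μ (mul_pos hκ (hS.pos t ht)) (hf.comp measurable_prodMk_right)

theorem edist_rpow_mul_measure_le {α Y : Type*} [MeasurableSpace α] [PseudoEMetricSpace Y]
    {ν : Measure α} {p : ℝ} (hp : 0 ≤ p) {f : α → Y} (x y : Y)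
    (hf : Measurable fun z => edist (f z) x) (B : Set α) :
    edist x y ^ p * ν B ≤ ENNReal.LpAddConst (ENNReal.ofReal p)⁻¹ *
      (∫⁻ z in B, edist (f z) x ^ p ∂ν + ∫⁻ z in B, edist (f z) y ^ p ∂ν) := by
  rw [← setLIntegral_const, ← lintegral_add_left (hf.pow_const p),
    ← lintegral_const_mul' _ _ (ENNReal.LpAddConst_lt_top _).ne]
  exact lintegral_mono fun z => (ENNReal.rpow_le_rpow (edist_triangle_left x y (f z)) hp).trans
    (ENNReal.rpow_add_le_mul_rpow_add_rpow' _ _ hp)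

theorem rpow_le_max_one_rpow {a t : ℝ} (ha : 0 < a) (hat : a ≤ t) (ht : t ≤ 1) (e : ℝ) :
    t ^ e ≤ max 1 (a ^ e) := by
  rcases le_total 0 e with he | he
  · exact le_max_of_le_left (Real.rpow_le_one (ha.le.trans hat) ht he)
  · exact le_max_of_le_right (Real.rpow_le_rpow_of_nonpos ha hat he)

theorem exists_pos_le_ofReal_rpow {K : ℝ≥0∞} (hK : K ≠ ∞) {p : ℝ} (hp : p ≠ 0) :
    ∃ C : ℝ, 0 < C ∧ K ≤ ENNReal.ofReal (C ^ p) := by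
  have hK' : 0 < K.toReal + 1 := by positivity
  refine ⟨(K.toReal + 1) ^ p⁻¹, by positivity, ?_⟩
  rw [Real.rpow_inv_rpow hK'.le hp]
  exact (ENNReal.le_ofReal_iff_toReal_le hK hK'.le).2 (by linarith)

/-- The increment density `|u(y) - u(x)|^p / (ϑ x_d)^q` at `x = (x', x_d)`, common to the localized
seminorm and its directional variants, for maps into an arbitrary metric space. -/
noncomputable def weightedIncrement {E Y : Type*} [EDist Y] (ϑ p q : ℝ) (u : E × ℝ → Y)
    (x y : E × ℝ) : ℝ≥0∞ :=
  edist (u y) (u x) ^ p / ENNReal.ofReal ((ϑ * x.2) ^ q)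

theorem measurable_weightedIncrement {E Y : Type*} [MeasurableSpace E] [PseudoEMetricSpace Y]
    [SecondCountableTopology Y] [MeasurableSpace Y] [OpensMeasurableSpace Y] (ϑ p q : ℝ)
    {u : E × ℝ → Y} (hu : Measurable u) :
    Measurable fun z : (E × ℝ) × (E × ℝ) => weightedIncrement ϑ p q u z.1 z.2 := by
  refine Measurable.div ?_ ?_
  · exact ((hu.comp measurable_snd).edist (hu.comp measurable_fst)).pow_const p
  · exact ENNReal.measurable_ofReal.comp (Measurable.pow_const (by fun_prop) q)

section LocalEnergy

open Module (finrank)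

variable {E Y : Type*} [NormedAddCommGroup E]

/-- The part of the Euclidean ball `B(x, ϑ x_d)` with heights in `S`. The Euclidean distance is
spelled out because `E × ℝ` carries the sup distance. -/
def interactionRegion (S : Set ℝ) (ϑ : ℝ) (x : E × ℝ) : Set (E × ℝ) :=
  {y | y.2 ∈ S ∧ dist y.1 x.1 ^ 2 + (y.2 - x.2) ^ 2 < (ϑ * x.2) ^ 2}

/-- A box below `x`, of size proportional to its height `x_d`, which lies in the interaction
region of each of its points when `δ` is small compared with `ϑ`. -/
def stripeBox (δ : ℝ) (x : E × ℝ) : Set (E × ℝ) :=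
  Metric.ball x.1 (δ * x.2) ×ˢ Set.Ioc ((1 - δ) * x.2) x.2

theorem self_mem_stripeBox {δ : ℝ} (hδ : 0 < δ) {x : E × ℝ} (hx : 0 < x.2) :
    x ∈ stripeBox δ x :=
  ⟨Metric.mem_ball_self (by positivity), by nlinarith, le_rfl⟩

theorem stripeBox_subset_interactionRegion {S : Set ℝ} (hS : IsHeightRange S) {ϑ δ : ℝ}
    (hϑ : 0 < ϑ) (hδ : 0 < δ) (hδϑ : 3 * δ ≤ ϑ * (1 - δ)) {x y : E × ℝ} (hx : x.2 ∈ S)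
    (hy : y ∈ stripeBox δ x) : stripeBox δ x ⊆ interactionRegion S ϑ y := by
  rintro z ⟨hz₁, hz₂⟩
  obtain ⟨hy₁, hy₂⟩ := hy
  have hx₀ := hS.pos _ hx
  have hδ₁ : 0 < 1 - δ := by nlinarith
  refine ⟨hS.mem_of_le _ hx _ ((mul_pos hδ₁ hx₀).trans hz₂.1) hz₂.2, ?_⟩
  have hdist : dist z.1 y.1 ≤ 2 * (δ * x.2) := by
    linarith [dist_triangle_right z.1 y.1 x.1, Metric.mem_ball.1 hz₁, Metric.mem_ball.1 hy₁]
  have hheight : |z.2 - y.2| ≤ δ * x.2 :=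
    abs_le.2 ⟨by linarith [hz₂.1, hy₂.2], by linarith [hz₂.2, hy₂.1]⟩
  have hradius : 3 * (δ * x.2) ≤ ϑ * y.2 := by
    calc 3 * (δ * x.2) = 3 * δ * x.2 := by ring
      _ ≤ ϑ * (1 - δ) * x.2 := by gcongr
      _ = ϑ * ((1 - δ) * x.2) := by ring
      _ ≤ ϑ * y.2 := by gcongr; exact hy₂.1.le
  calc dist z.1 y.1 ^ 2 + (z.2 - y.2) ^ 2 ≤ (2 * (δ * x.2)) ^ 2 + (δ * x.2) ^ 2 := by
        rw [← sq_abs (z.2 - y.2)]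
        gcongr
    _ < (3 * (δ * x.2)) ^ 2 := by nlinarith [sq_pos_of_pos (mul_pos hδ hx₀)]
    _ ≤ (ϑ * y.2) ^ 2 := by gcongr

variable [MeasurableSpace E]

theorem measurableSet_interactionRegion [OpensMeasurableSpace E] [SecondCountableTopology E]
    {S : Set ℝ} (hS : MeasurableSet S) (ϑ : ℝ) :
    MeasurableSet {z : (E × ℝ) × (E × ℝ) | z.2 ∈ interactionRegion S ϑ z.1} := by
  have hdist : Measurable fun z : (E × ℝ) × (E × ℝ) =>
      dist z.2.1 z.1.1 ^ 2 + (z.2.2 - z.1.2) ^ 2 := by fun_prop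
  have hradius : Measurable fun z : (E × ℝ) × (E × ℝ) => (ϑ * z.1.2) ^ 2 := by fun_prop
  exact (measurable_snd.comp measurable_snd hS).inter (measurableSet_lt hdist hradius)

variable [NormedSpace ℝ E] (μ : Measure E)

/-- The inner integral at `x` of the localized seminorm. The Euclidean dimension of `E × ℝ` enters
the weight through `finrank ℝ E + 1`. -/
noncomputable def localEnergy [EDist Y] (S : Set ℝ) (ϑ p q : ℝ) (u : E × ℝ → Y) (x : E × ℝ) :
    ℝ≥0∞ :=
  ∫⁻ y in interactionRegion S ϑ x, weightedIncrement ϑ p (finrank ℝ E + 1 + q) u x y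
    ∂μ.prod volume

/-- The constant in `weightedIncrement_le_localEnergy_add`: the quasi-triangle constant of
`t ↦ t ^ p`, the oscillation of the weight on a `stripeBox`, and the ratio of `(ϑ x_d) ^ d` to the
volume of the box. -/
noncomputable def incrementConst (ϑ δ p q : ℝ) : ℝ≥0∞ :=
  ENNReal.LpAddConst (ENNReal.ofReal p)⁻¹ *
    ENNReal.ofReal (max 1 ((1 - δ) ^ (finrank ℝ E + 1 + q)) * (ϑ / δ) ^ (finrank ℝ E + 1)) /
      μ (Metric.ball 0 1)

theorem setLIntegral_edist_rpow_le_localEnergy [PseudoEMetricSpace Y] {S : Set ℝ}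
    (hS : IsHeightRange S) {ϑ δ : ℝ} (hϑ : 0 < ϑ) (hδ : 0 < δ) (hδϑ : 3 * δ ≤ ϑ * (1 - δ))
    (p q : ℝ) (u : E × ℝ → Y) {x y : E × ℝ} (hx : x.2 ∈ S) (hy : y ∈ stripeBox δ x) :
    ∫⁻ z in stripeBox δ x, edist (u z) (u y) ^ p ∂μ.prod volume ≤
      ENNReal.ofReal (max 1 ((1 - δ) ^ (finrank ℝ E + 1 + q)) *
        (ϑ * x.2) ^ (finrank ℝ E + 1 + q)) * localEnergy μ S ϑ p q u y := by
  set e : ℝ := finrank ℝ E + 1 + q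
  have hx₀ := hS.pos _ hx
  have hδ₁ : 0 < 1 - δ := by nlinarith
  have hy₀ : 0 < y.2 := (mul_pos hδ₁ hx₀).trans hy.2.1
  have hweight : (ϑ * y.2) ^ e ≤ max 1 ((1 - δ) ^ e) * (ϑ * x.2) ^ e := by
    have hratio := rpow_le_max_one_rpow hδ₁ ((le_div_iff₀ hx₀).2 hy.2.1.le)
      ((div_le_one hx₀).2 hy.2.2) e
    calc (ϑ * y.2) ^ e = (y.2 / x.2) ^ e * (ϑ * x.2) ^ e := by
          rw [← Real.mul_rpow (by positivity) (by positivity)]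
          congr 1
          field_simp
      _ ≤ _ := by gcongr
  have hpos : 0 < (ϑ * y.2) ^ e := by positivity
  calc ∫⁻ z in stripeBox δ x, edist (u z) (u y) ^ p ∂μ.prod volume
      ≤ ∫⁻ z in interactionRegion S ϑ y, edist (u z) (u y) ^ p ∂μ.prod volume :=
        lintegral_mono_set (stripeBox_subset_interactionRegion hS hϑ hδ hδϑ hx hy)
    _ = ENNReal.ofReal ((ϑ * y.2) ^ e) * localEnergy μ S ϑ p q u y := by
        rw [localEnergy, ← lintegral_const_mul' _ _ ENNReal.ofReal_ne_top]
        refine lintegral_congr fun z => ?_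
        rw [weightedIncrement, ENNReal.mul_div_cancel (ENNReal.ofReal_pos.2 hpos).ne'
          ENNReal.ofReal_ne_top]
    _ ≤ _ := by gcongr

theorem incrementConst_ne_top [μ.IsOpenPosMeasure] (ϑ δ p q : ℝ) : incrementConst μ ϑ δ p q ≠ ∞ :=
  ENNReal.div_ne_top (ENNReal.mul_ne_top (ENNReal.LpAddConst_lt_top _).ne ENNReal.ofReal_ne_top)
    (Metric.measure_ball_pos μ 0 one_pos).ne'

variable [FiniteDimensional ℝ E] [BorelSpace E] [μ.IsAddHaarMeasure]

theorem measure_stripeBox {δ : ℝ} (hδ : 0 < δ) {x : E × ℝ} (hx : 0 < x.2) :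
    μ.prod volume (stripeBox δ x) =
      ENNReal.ofReal ((δ * x.2) ^ (finrank ℝ E + 1)) * μ (Metric.ball 0 1) := by
  rw [stripeBox, Measure.prod_prod, Measure.addHaar_ball_of_pos μ x.1 (by positivity),
    Real.volume_Ioc, pow_succ, ENNReal.ofReal_mul (by positivity), mul_right_comm]
  congr 3
  ring

theorem measure_stripeBox_ne_zero {δ : ℝ} (hδ : 0 < δ) {x : E × ℝ} (hx : 0 < x.2) :
    μ.prod volume (stripeBox δ x) ≠ 0 := by
  rw [measure_stripeBox μ hδ hx]
  exact mul_ne_zero (ENNReal.ofReal_pos.2 (by positivity)).ne'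
    (Metric.measure_ball_pos μ 0 one_pos).ne'

theorem measure_stripeBox_ne_top {δ : ℝ} (hδ : 0 < δ) {x : E × ℝ} (hx : 0 < x.2) :
    μ.prod volume (stripeBox δ x) ≠ ∞ := by
  rw [measure_stripeBox μ hδ hx]
  exact ENNReal.mul_ne_top ENNReal.ofReal_ne_top measure_ball_lt_top.ne

theorem incrementConst_mul_measure_stripeBox {ϑ δ : ℝ} (hϑ : 0 < ϑ) (hδ : 0 < δ) (p q : ℝ)
    {x : E × ℝ} (hx : 0 < x.2) :
    incrementConst μ ϑ δ p q * ENNReal.ofReal ((ϑ * x.2) ^ q) * μ.prod volume (stripeBox δ x) =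
      ENNReal.LpAddConst (ENNReal.ofReal p)⁻¹ *
        ENNReal.ofReal (max 1 ((1 - δ) ^ (finrank ℝ E + 1 + q)) *
          (ϑ * x.2) ^ (finrank ℝ E + 1 + q)) := by
  have hr : 0 < ϑ * x.2 := by positivity
  have hweight : max 1 ((1 - δ) ^ (finrank ℝ E + 1 + q)) * (ϑ * x.2) ^ (finrank ℝ E + 1 + q) =
      max 1 ((1 - δ) ^ (finrank ℝ E + 1 + q)) * (ϑ / δ) ^ (finrank ℝ E + 1) *
        ((ϑ * x.2) ^ q * (δ * x.2) ^ (finrank ℝ E + 1)) := by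
    have hpow : (ϑ * x.2) ^ ((finrank ℝ E : ℝ) + 1) = (ϑ * x.2) ^ (finrank ℝ E + 1) := by
      exact_mod_cast Real.rpow_natCast (ϑ * x.2) (finrank ℝ E + 1)
    rw [Real.rpow_add hr _ q, hpow, mul_pow δ, mul_pow ϑ, div_pow]
    field_simp
  have hv : (μ (Metric.ball (0 : E) 1))⁻¹ * μ (Metric.ball (0 : E) 1) = 1 :=
    ENNReal.inv_mul_cancel (Metric.measure_ball_pos μ 0 one_pos).ne' measure_ball_lt_top.ne
  rw [hweight, ENNReal.ofReal_mul (by positivity),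
    ENNReal.ofReal_mul (p := (ϑ * x.2) ^ q) (by positivity),
    measure_stripeBox μ hδ hx, incrementConst, div_eq_mul_inv]
  calc _ = ENNReal.LpAddConst (ENNReal.ofReal p)⁻¹ * (ENNReal.ofReal
          (max 1 ((1 - δ) ^ (finrank ℝ E + 1 + q)) * (ϑ / δ) ^ (finrank ℝ E + 1)) *
          (ENNReal.ofReal ((ϑ * x.2) ^ q) * ENNReal.ofReal ((δ * x.2) ^ (finrank ℝ E + 1)))) *
          ((μ (Metric.ball (0 : E) 1))⁻¹ * μ (Metric.ball (0 : E) 1)) := by ring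
    _ = _ := by rw [hv, mul_one]

variable [PseudoEMetricSpace Y] [SecondCountableTopology Y] [MeasurableSpace Y]
  [OpensMeasurableSpace Y] {S : Set ℝ} {ϑ δ p : ℝ} (q : ℝ) {u : E × ℝ → Y}

theorem weightedIncrement_le_localEnergy_add (hS : IsHeightRange S) (hϑ : 0 < ϑ) (hδ : 0 < δ)
    (hδϑ : 3 * δ ≤ ϑ * (1 - δ)) (hp : 0 ≤ p) (hu : Measurable u) {x y : E × ℝ} (hx : x.2 ∈ S)
    (hy : y ∈ stripeBox δ x) :
    weightedIncrement ϑ p q u x y ≤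
      incrementConst μ ϑ δ p q * (localEnergy μ S ϑ p q u x + localEnergy μ S ϑ p q u y) := by
  have hx₀ := hS.pos _ hx
  have hr : 0 < (ϑ * x.2) ^ q := by positivity
  rw [weightedIncrement, ENNReal.div_le_iff (ENNReal.ofReal_pos.2 hr).ne' ENNReal.ofReal_ne_top,
    ← ENNReal.mul_le_mul_iff_left (measure_stripeBox_ne_zero μ hδ hx₀)
      (measure_stripeBox_ne_top μ hδ hx₀)]
  calc edist (u y) (u x) ^ p * μ.prod volume (stripeBox δ x)
      ≤ ENNReal.LpAddConst (ENNReal.ofReal p)⁻¹ *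
          (∫⁻ z in stripeBox δ x, edist (u z) (u y) ^ p ∂μ.prod volume +
            ∫⁻ z in stripeBox δ x, edist (u z) (u x) ^ p ∂μ.prod volume) :=
        edist_rpow_mul_measure_le hp _ _ (hu.edist measurable_const) _
    _ ≤ ENNReal.LpAddConst (ENNReal.ofReal p)⁻¹ *
          (ENNReal.ofReal (max 1 ((1 - δ) ^ (finrank ℝ E + 1 + q)) *
            (ϑ * x.2) ^ (finrank ℝ E + 1 + q)) *
            (localEnergy μ S ϑ p q u y + localEnergy μ S ϑ p q u x)) := by
        rw [mul_add (ENNReal.ofReal _)]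
        gcongr
        · exact setLIntegral_edist_rpow_le_localEnergy μ hS hϑ hδ hδϑ p q u hx hy
        · exact setLIntegral_edist_rpow_le_localEnergy μ hS hϑ hδ hδϑ p q u hx
            (self_mem_stripeBox hδ hx₀)
    _ = incrementConst μ ϑ δ p q * ENNReal.ofReal ((ϑ * x.2) ^ q) *
          μ.prod volume (stripeBox δ x) *
          (localEnergy μ S ϑ p q u x + localEnergy μ S ϑ p q u y) := by
        rw [incrementConst_mul_measure_stripeBox μ hϑ hδ p q hx₀]
        ring
    _ = _ := by ring

theorem measurable_localEnergy (hS : MeasurableSet S) (ϑ p : ℝ) (hu : Measurable u) :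
    Measurable (localEnergy μ S ϑ p q u) :=
  measurable_setLIntegral_section (measurableSet_interactionRegion hS ϑ)
    (measurable_weightedIncrement ϑ p _ hu)

theorem lintegral_normalIncrement_le (hS : IsHeightRange S) (hϑ : 0 < ϑ) (hδ : 0 < δ)
    (hδϑ : 3 * δ ≤ ϑ * (1 - δ)) (hp : 0 ≤ p) (hu : Measurable u) :
    ∫⁻ x, ⨍⁻ r in Set.Ioc ((1 - δ) * x.2) x.2, weightedIncrement ϑ p q u x (x.1, r) ∂volume
        ∂μ.prod (volume.restrict S) ≤
      incrementConst μ ϑ δ p q * (1 + ENNReal.ofReal (1 - δ)⁻¹) *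
        ∫⁻ x, localEnergy μ S ϑ p q u x ∂μ.prod (volume.restrict S) := by
  have hδ₁ : 0 < 1 - δ := by nlinarith
  have hF := measurable_localEnergy μ q hS.measurableSet ϑ p hu
  have hmem := ae_snd_mem_prod_restrict (μ := μ) (ν := volume) hS.measurableSet
  have hvol : ∀ᵐ x ∂μ.prod (volume.restrict S), volume (Set.Ioc ((1 - δ) * x.2) x.2) ≠ 0 := by
    filter_upwards [hmem] with x hx
    rw [Real.volume_Ioc]
    exact (ENNReal.ofReal_pos.2 (by nlinarith [hS.pos _ hx])).ne'
  have hw : ∀ᵐ x ∂μ.prod (volume.restrict S), ∀ r ∈ Set.Ioc ((1 - δ) * x.2) x.2,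
      weightedIncrement ϑ p q u x (x.1, r) ≤ incrementConst μ ϑ δ p q *
        (localEnergy μ S ϑ p q u x + localEnergy μ S ϑ p q u (x.1, r)) := by
    filter_upwards [hmem] with x hx r hr
    exact weightedIncrement_le_localEnergy_add μ q hS hϑ hδ hδϑ hp hu hx
      ⟨(self_mem_stripeBox hδ (hS.pos _ hx)).1, hr⟩
  refine (lintegral_setLAverage_le_mul_add (fun _ => measurableSet_Ioc) hvol
    (.of_forall fun _ => measure_Ioc_lt_top.ne) hF (incrementConst_ne_top μ ϑ δ p q) hw).trans ?_
  rw [mul_assoc, add_mul, one_mul]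
  gcongr
  exact lintegral_normalAverage_le μ hS hδ₁ (by linarith) hF

theorem lintegral_tangentIncrement_le (hS : IsHeightRange S) (hϑ : 0 < ϑ) (hδ : 0 < δ)
    (hδϑ : 3 * δ ≤ ϑ * (1 - δ)) (hp : 0 ≤ p) (hu : Measurable u) :
    ∫⁻ x, ⨍⁻ y' in Metric.ball x.1 (δ * x.2), weightedIncrement ϑ p q u x (y', x.2) ∂μ
        ∂μ.prod (volume.restrict S) ≤
      incrementConst μ ϑ δ p q * 2 *
        ∫⁻ x, localEnergy μ S ϑ p q u x ∂μ.prod (volume.restrict S) := by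
  have hF := measurable_localEnergy μ q hS.measurableSet ϑ p hu
  have hmem := ae_snd_mem_prod_restrict (μ := μ) (ν := volume) hS.measurableSet
  have hvol : ∀ᵐ x ∂μ.prod (volume.restrict S), μ (Metric.ball x.1 (δ * x.2)) ≠ 0 := by
    filter_upwards [hmem] with x hx
    exact (Metric.measure_ball_pos μ _ (mul_pos hδ (hS.pos _ hx))).ne'
  have hw : ∀ᵐ x ∂μ.prod (volume.restrict S), ∀ y' ∈ Metric.ball x.1 (δ * x.2),
      weightedIncrement ϑ p q u x (y', x.2) ≤ incrementConst μ ϑ δ p q *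
        (localEnergy μ S ϑ p q u x + localEnergy μ S ϑ p q u (y', x.2)) := by
    filter_upwards [hmem] with x hx y' hy'
    exact weightedIncrement_le_localEnergy_add μ q hS hϑ hδ hδϑ hp hu hx
      ⟨hy', (self_mem_stripeBox hδ (hS.pos _ hx)).2⟩
  refine (lintegral_setLAverage_le_mul_add (fun _ => measurableSet_ball) hvol
    (.of_forall fun _ => measure_ball_lt_top.ne) hF (incrementConst_ne_top μ ϑ δ p q) hw).trans ?_
  rw [lintegral_tangentAverage_eq μ hS hδ hF, ← two_mul, mul_assoc]

end LocalEnergy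

section Stripe

variable {d : ℕ} {S : Set ℝ} {ϑ p : ℝ} {u : EuclideanSpace ℝ (Fin (d - 1)) → ℝ → ℝ}

theorem ofReal_abs_sub_rpow_div_eq_weightedIncrement {E : Type*}
    (hp : 0 ≤ p) (hϑ : 0 < ϑ) (q : ℝ) (u : E × ℝ → ℝ) {x : E × ℝ} (hx : 0 < x.2) (y : E × ℝ) :
    ENNReal.ofReal (|u y - u x| ^ p / (ϑ * x.2) ^ q) = weightedIncrement ϑ p q u x y := by
  rw [ENNReal.ofReal_div_of_pos (by positivity),
    ← ENNReal.ofReal_rpow_of_nonneg (abs_nonneg _) hp, weightedIncrement, edist_dist,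
    Real.dist_eq]

theorem stripeSemi_eq (hd : 1 ≤ d) (hS : IsHeightRange S) (hϑ : 0 < ϑ) (hp : 0 ≤ p) (s : ℝ)
    (hu : Measurable u.uncurry) :
    stripeSemi d S ϑ p s u =
      ∫⁻ x, localEnergy volume S ϑ p (p * s) u.uncurry x
        ∂(volume : Measure (EuclideanSpace ℝ (Fin (d - 1)))).prod (volume.restrict S) := by
  have hfinrank : (Module.finrank ℝ (EuclideanSpace ℝ (Fin (d - 1))) : ℝ) + 1 = d := by
    rw [finrank_euclideanSpace_fin]
    exact_mod_cast Nat.sub_add_cancel hd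
  rw [lintegral_prod _ (measurable_localEnergy volume _ hS.measurableSet ϑ p hu).aemeasurable]
  refine lintegral_congr fun x' => setLIntegral_congr_fun hS.measurableSet fun t ht => ?_
  have hregion : MeasurableSet (interactionRegion S ϑ (x', t)) :=
    measurable_prodMk_left (measurableSet_interactionRegion hS.measurableSet ϑ)
  have hincr : Measurable (weightedIncrement ϑ p (d + p * s) u.uncurry (x', t)) :=
    (measurable_weightedIncrement ϑ p _ hu).comp measurable_prodMk_left
  rw [localEnergy, hfinrank, ← lintegral_indicator hregion,
    lintegral_prod _ (hincr.indicator hregion).aemeasurable]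
  refine lintegral_congr fun y' => ?_
  have hsection : MeasurableSet (S ∩ {r | dist y' x' ^ 2 + (r - t) ^ 2 < (ϑ * t) ^ 2}) :=
    measurable_prodMk_left hregion
  rw [← lintegral_indicator hsection]
  refine lintegral_congr fun r => ?_
  simp only [← ofReal_abs_sub_rpow_div_eq_weightedIncrement hp hϑ _ u.uncurry (x := (x', t))
    (hS.pos t ht), Set.indicator]
  rfl

theorem stripeNormalSemi_eq (hS : IsHeightRange S) (hϑ : 0 < ϑ) (hp : 0 ≤ p) (a b s : ℝ)
    (hu : Measurable u.uncurry) :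
    stripeNormalSemi d S ϑ a b p s u =
      ∫⁻ x, ⨍⁻ r in Set.Ioc (a * x.2) (b * x.2),
        weightedIncrement ϑ p (p * s) u.uncurry x (x.1, r)
        ∂volume ∂(volume : Measure (EuclideanSpace ℝ (Fin (d - 1)))).prod (volume.restrict S) := by
  have hpair : Measurable fun z : (EuclideanSpace ℝ (Fin (d - 1)) × ℝ) × ℝ =>
      (z.1, (z.1.1, z.2)) := by fun_prop
  have hmeas := measurable_setLAverage_section (ν := volume)
    (A := fun x : EuclideanSpace ℝ (Fin (d - 1)) × ℝ => Set.Ioc (a * x.2) (b * x.2))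
    (measurableSet_snd_mem_Ioc (measurable_snd.const_mul a) (measurable_snd.const_mul b))
    ((measurable_weightedIncrement ϑ p (p * s) hu).comp hpair)
  refine Eq.trans ?_ (lintegral_prod _ hmeas.aemeasurable).symm
  refine lintegral_congr fun x' => setLIntegral_congr_fun hS.measurableSet fun t ht => ?_
  simp only [setLAverage_eq, Function.comp_apply, ENNReal.div_eq_inv_mul, Real.volume_Ioc, sub_mul,
    ← ofReal_abs_sub_rpow_div_eq_weightedIncrement hp hϑ _ u.uncurry (x := (x', t)) (hS.pos t ht)]
  rfl

theorem stripeTangentSemi_eq (hS : IsHeightRange S) (hϑ : 0 < ϑ) (hp : 0 ≤ p) (κ s : ℝ)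
    (hu : Measurable u.uncurry) :
    stripeTangentSemi d S ϑ κ p s u =
      ∫⁻ x, ⨍⁻ y' in Metric.ball x.1 (κ * x.2),
        weightedIncrement ϑ p (p * s) u.uncurry x (y', x.2)
        ∂volume ∂(volume : Measure (EuclideanSpace ℝ (Fin (d - 1)))).prod (volume.restrict S) := by
  have hpair : Measurable
      fun z : (EuclideanSpace ℝ (Fin (d - 1)) × ℝ) × EuclideanSpace ℝ (Fin (d - 1)) =>
        (z.1, (z.2, z.1.2)) := by fun_prop
  have hmeas := measurable_setLAverage_section (ν := volume)
    (A := fun x : EuclideanSpace ℝ (Fin (d - 1)) × ℝ => Metric.ball x.1 (κ * x.2))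
    (measurableSet_snd_mem_ball measurable_fst (measurable_snd.const_mul κ))
    ((measurable_weightedIncrement ϑ p (p * s) hu).comp hpair)
  refine Eq.trans ?_ (lintegral_prod _ hmeas.aemeasurable).symm
  refine lintegral_congr fun x' => setLIntegral_congr_fun hS.measurableSet fun t ht => ?_
  simp only [setLAverage_eq, Function.comp_apply, ENNReal.div_eq_inv_mul,
    ← ofReal_abs_sub_rpow_div_eq_weightedIncrement hp hϑ _ u.uncurry (x := (x', t)) (hS.pos t ht)]
  rfl

end Stripe

theorem stmt_8_general (d : ℕ) (hd : 1 ≤ d) (p s ϑ : ℝ) (hp : 0 < p) (hϑ : 0 < ϑ) :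
    ∃ C a b κ : ℝ, 0 < C ∧ 0 ≤ a ∧ a < b ∧ b ≤ 1 ∧ 0 < κ ∧ κ < 1 ∧
      (a - 1) ^ 2 + κ ^ 2 ≤ ϑ ^ 2 ∧
      ∀ S, IsHeightRange S → ∀ u : EuclideanSpace ℝ (Fin (d - 1)) → ℝ → ℝ, Measurable u.uncurry →
        stripeNormalSemi d S ϑ a b p s u ≤ ENNReal.ofReal (C ^ p) * stripeSemi d S ϑ p s u ∧
          stripeTangentSemi d S ϑ κ p s u ≤ ENNReal.ofReal (C ^ p) * stripeSemi d S ϑ p s u := by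
  obtain ⟨δ, hδ, hδ₁, hδϑ⟩ : ∃ δ : ℝ, 0 < δ ∧ δ < 1 ∧ 3 * δ ≤ ϑ * (1 - δ) :=
    ⟨ϑ / (ϑ + 3), by positivity, (div_lt_one (by positivity)).2 (by linarith),
      (by field_simp; ring : 3 * (ϑ / (ϑ + 3)) = ϑ * (1 - ϑ / (ϑ + 3))).le⟩
  have hK : incrementConst (volume : Measure (EuclideanSpace ℝ (Fin (d - 1)))) ϑ δ p (p * s) *
      (1 + ENNReal.ofReal (1 - δ)⁻¹) ≠ ∞ :=
    ENNReal.mul_ne_top (incrementConst_ne_top _ _ _ _ _) (by finiteness)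
  obtain ⟨C, hC, hKC⟩ := exists_pos_le_ofReal_rpow hK hp.ne'
  have htwo : 2 ≤ 1 + ENNReal.ofReal (1 - δ)⁻¹ := by
    rw [← one_add_one_eq_two]
    gcongr
    exact ENNReal.one_le_ofReal.2 (one_le_inv₀ (sub_pos.2 hδ₁) |>.2 (by linarith))
  refine ⟨C, 1 - δ, 1, δ, hC, by linarith, by linarith, le_rfl, hδ, hδ₁, by nlinarith, ?_⟩
  intro S hS u hu
  rw [stripeSemi_eq hd hS hϑ hp.le s hu, stripeNormalSemi_eq hS hϑ hp.le _ _ s hu,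
    stripeTangentSemi_eq hS hϑ hp.le _ s hu]
  constructor
  · simp only [one_mul]
    grw [lintegral_normalIncrement_le volume _ hS hϑ hδ hδϑ hp.le hu, hKC]
  · grw [lintegral_tangentIncrement_le volume _ hS hϑ hδ hδϑ hp.le hu, htwo, hKC]

/-- Control of the normal and tangential directional seminorms by the localized
nonlocal seminorm `|u|_{𝔚^{s,p}_ϑ(ℝ^d_{M+})}` on the stripe `ℝ^{d-1} × (0,M]`,
`M ∈ (0,∞]`. -/
theorem stmt_8 (d : ℕ) (hd : 2 ≤ d) (p s ϑ : ℝ) (hp : 1 ≤ p) (hs0 : 0 < s)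
    (hs1 : s ≤ 1) (hsp : 1 < s * p) (hϑ0 : 0 < ϑ) (hϑ1 : ϑ ≤ 1)
    (M : ℝ≥0∞) (hM : 0 < M) :
    ∃ C a b κ : ℝ, 0 < C ∧ 0 ≤ a ∧ a < b ∧ b ≤ 1 ∧ 0 < κ ∧ κ < 1 ∧
      (a - 1) ^ 2 + κ ^ 2 ≤ ϑ ^ 2 ∧
      ∀ u : EuclideanSpace ℝ (Fin (d - 1)) → ℝ → ℝ,
        Measurable (fun q : EuclideanSpace ℝ (Fin (d - 1)) × ℝ => u q.1 q.2) →
        stripeSemi d {t : ℝ | 0 < t ∧ ENNReal.ofReal t ≤ M} ϑ p s u ≠ ⊤ →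
        stripeNormalSemi d {t : ℝ | 0 < t ∧ ENNReal.ofReal t ≤ M} ϑ a b p s u ≤
            ENNReal.ofReal (C ^ p) *
              stripeSemi d {t : ℝ | 0 < t ∧ ENNReal.ofReal t ≤ M} ϑ p s u ∧
          stripeTangentSemi d {t : ℝ | 0 < t ∧ ENNReal.ofReal t ≤ M} ϑ κ p s u ≤
            ENNReal.ofReal (C ^ p) *
              stripeSemi d {t : ℝ | 0 < t ∧ ENNReal.ofReal t ≤ M} ϑ p s u := by
  obtain ⟨C, a, b, κ, hC, ha, hab, hb, hκ, hκ₁, hϑκ, hbound⟩ :=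
    stmt_8_general d (by linarith) p s ϑ (by linarith) hϑ0
  exact ⟨C, a, b, κ, hC, ha, hab, hb, hκ, hκ₁, hϑκ, fun u hu _ =>
    hbound _ (isHeightRange_ofReal_le M) u hu⟩
end

section
/- Let d ≥ 2, p ≥ 1, s ∈ (0,1] with sp > 1, and ϑ ∈ (0,1]. There exists a constant C = C(d, p, s, ϑ) such that for every M > 0 and every Lipschitz function u on the closure of ℝ^d_{M+} belonging to 𝔚^{s,p}_ϑ(ℝ^d_{M+}) with u(x', 0) = 0 for all x' ∈ ℝ^{d-1}, one has (∫_{ℝ^d_{M+}} |u(x)|^p / x_d^{ps} dx)^{1/p} ≤ C |u|_{𝔚^{s,p}_ϑ(ℝ^d_{M+})}. -/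
open MeasureTheory
open scoped ENNReal NNReal

/-!
For a parameter `w = (b, l)` with `0 < l < 1`, iterating the shear `T (x, t) = (x + t • b, l * t)`
drives every point to the boundary `t = 0`, where `v` vanishes, so `-v` is the sum of the
increments of `v` along the orbit. Since `T` maps the measure `t ^ (-σ) dx dt` into
`l ^ (σ - 1)` times itself, for `σ > 1` Minkowski's inequality turns that sum into a convergent
geometric series, and `‖v‖_p` is at most a constant times `‖v ∘ T - v‖_p`. Averaging over a small
ball of parameters `w` close to `(0, 1)` and changing variables from `w` to `y = T (x, t)`, with
Jacobian `t ^ d`, produces the localized seminorm.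
-/

open Filter Metric Set Topology

section Contraction

variable {α F : Type*} [MeasurableSpace α] [NormedAddCommGroup F] {ν : Measure α} {T : α → α}
  {ρ p : ℝ≥0∞} {f : α → F}

theorem quasiMeasurePreserving_of_map_le_smul (hT : Measurable T) (hν : ν.map T ≤ ρ • ν) :
    Measure.QuasiMeasurePreserving T ν ν :=
  ⟨hT, Measure.absolutelyContinuous_of_le_smul hν⟩

theorem eLpNorm_comp_le_of_map_le_smul (hT : Measurable T) (hν : ν.map T ≤ ρ • ν)
    (hf : AEStronglyMeasurable f ν) :
    eLpNorm (f ∘ T) p ν ≤ ρ ^ p.toReal⁻¹ * eLpNorm f p ν := by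
  have hf_map := hf.mono_ac (quasiMeasurePreserving_of_map_le_smul hT hν).absolutelyContinuous
  calc eLpNorm (f ∘ T) p ν = eLpNorm f p (ν.map T) :=
        (eLpNorm_map_measure hf_map hT.aemeasurable).symm
    _ ≤ eLpNorm f p (ρ • ν) := eLpNorm_mono_measure f hν
    _ ≤ ρ ^ p.toReal⁻¹ * eLpNorm f p ν := by
        simpa [smul_eq_mul] using eLpNorm_smul_measure_le ρ f p ν

theorem eLpNorm_comp_iterate_le_of_map_le_smul (hT : Measurable T) (hν : ν.map T ≤ ρ • ν)
    (hf : AEStronglyMeasurable f ν) (n : ℕ) :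
    eLpNorm (f ∘ T^[n]) p ν ≤ (ρ ^ p.toReal⁻¹) ^ n * eLpNorm f p ν := by
  have hqmp := quasiMeasurePreserving_of_map_le_smul hT hν
  induction n with
  | zero => simp
  | succ n ih =>
    calc eLpNorm (f ∘ T^[n + 1]) p ν = eLpNorm ((f ∘ T^[n]) ∘ T) p ν := by
          rw [Function.iterate_succ, Function.comp_assoc]
      _ ≤ ρ ^ p.toReal⁻¹ * eLpNorm (f ∘ T^[n]) p ν :=
          eLpNorm_comp_le_of_map_le_smul hT hν
            (hf.comp_quasiMeasurePreserving (hqmp.iterate n))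
      _ ≤ ρ ^ p.toReal⁻¹ * ((ρ ^ p.toReal⁻¹) ^ n * eLpNorm f p ν) := by gcongr
      _ = (ρ ^ p.toReal⁻¹) ^ (n + 1) * eLpNorm f p ν := by rw [pow_succ', mul_assoc]

theorem eLpNorm_comp_iterate_sub_le_of_map_le_smul (hT : Measurable T) (hν : ν.map T ≤ ρ • ν)
    (hf : AEStronglyMeasurable f ν) (hp : 1 ≤ p) (n : ℕ) :
    eLpNorm (f ∘ T^[n] - f) p ν ≤ (1 - ρ ^ p.toReal⁻¹)⁻¹ * eLpNorm (f ∘ T - f) p ν := by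
  have hqmp := quasiMeasurePreserving_of_map_le_smul hT hν
  have hdiff : AEStronglyMeasurable (f ∘ T - f) ν := (hf.comp_quasiMeasurePreserving hqmp).sub hf
  have htelescope :
      f ∘ T^[n] - f = ∑ k ∈ Finset.range n, (f ∘ T - f) ∘ T^[k] := by
    ext z
    simpa [← Function.iterate_succ_apply'] using
      (Finset.sum_range_sub (fun k => f (T^[k] z)) n).symm
  calc eLpNorm (f ∘ T^[n] - f) p ν
      ≤ ∑ k ∈ Finset.range n, eLpNorm ((f ∘ T - f) ∘ T^[k]) p ν := by
        rw [htelescope]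
        exact eLpNorm_sum_le
          (fun k _ => hdiff.comp_quasiMeasurePreserving (hqmp.iterate k)) hp
    _ ≤ ∑ k ∈ Finset.range n, (ρ ^ p.toReal⁻¹) ^ k * eLpNorm (f ∘ T - f) p ν :=
        Finset.sum_le_sum fun k _ => eLpNorm_comp_iterate_le_of_map_le_smul hT hν hdiff k
    _ ≤ ∑' k : ℕ, (ρ ^ p.toReal⁻¹) ^ k * eLpNorm (f ∘ T - f) p ν := ENNReal.sum_le_tsum _
    _ = (1 - ρ ^ p.toReal⁻¹)⁻¹ * eLpNorm (f ∘ T - f) p ν := by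
        rw [ENNReal.tsum_mul_right, ENNReal.tsum_geometric]

theorem eLpNorm_le_of_tendsto_comp_iterate (hT : Measurable T) (hν : ν.map T ≤ ρ • ν)
    (hf : AEStronglyMeasurable f ν) (hp : 1 ≤ p)
    (hlim : ∀ᵐ z ∂ν, Tendsto (fun n => f (T^[n] z)) atTop (𝓝 0)) :
    eLpNorm f p ν ≤ (1 - ρ ^ p.toReal⁻¹)⁻¹ * eLpNorm (f ∘ T - f) p ν := by
  have hqmp := quasiMeasurePreserving_of_map_le_smul hT hν
  have hlim_sub : ∀ᵐ z ∂ν, Tendsto (fun n => (f ∘ T^[n] - f) z) atTop (𝓝 ((-f) z)) := by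
    filter_upwards [hlim] with z hz
    simpa using hz.sub_const (f z)
  calc eLpNorm f p ν = eLpNorm (-f) p ν := (eLpNorm_neg f p ν).symm
    _ ≤ liminf (fun n => eLpNorm (f ∘ T^[n] - f) p ν) atTop :=
        Lp.eLpNorm_lim_le_liminf_eLpNorm
          (fun n => (hf.comp_quasiMeasurePreserving (hqmp.iterate n)).sub hf) _ hlim_sub
    _ ≤ (1 - ρ ^ p.toReal⁻¹)⁻¹ * eLpNorm (f ∘ T - f) p ν :=
        liminf_le_of_frequently_le' (Frequently.of_forall fun n =>
          eLpNorm_comp_iterate_sub_le_of_map_le_smul hT hν hf hp n)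

end Contraction

section Shear

variable {E : Type*} [NormedAddCommGroup E] [NormedSpace ℝ E]

/-- The shear `(x, t) ↦ (x + t • b, l * t)` with parameter `w = (b, l)`. For `|l| < 1` its iterates
push every point to the boundary `E × {0}`, and for fixed `z` it is affine in `w`. -/
def shear (w z : E × ℝ) : E × ℝ := (z.1 + z.2 • w.1, w.2 * z.2)

theorem continuous_uncurry_shear : Continuous (Function.uncurry (shear (E := E))) := by
  unfold Function.uncurry shear
  fun_prop

theorem shear_eq_add_smul (w z : E × ℝ) : shear w z = (z.1, 0) + z.2 • w := by
  ext <;> simp [shear, mul_comm]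

theorem iterate_shear (w z : E × ℝ) (n : ℕ) :
    (shear w)^[n] z = (z.1 + ((∑ k ∈ Finset.range n, w.2 ^ k) * z.2) • w.1, w.2 ^ n * z.2) := by
  induction n with
  | zero => simp
  | succ n ih =>
    rw [Function.iterate_succ_apply', ih, Finset.sum_range_succ]
    refine Prod.ext ?_ ?_ <;> dsimp only [shear]
    · module
    · ring

theorem tendsto_iterate_shear {w : E × ℝ} (hw : |w.2| < 1) (z : E × ℝ) :
    Tendsto (fun n => (shear w)^[n] z) atTop (𝓝 (z.1 + ((1 - w.2)⁻¹ * z.2) • w.1, 0)) := by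
  have hsum := (hasSum_geometric_of_abs_lt_one hw).tendsto_sum_nat
  have hpow := (tendsto_pow_atTop_nhds_zero_of_abs_lt_one hw).mul_const z.2
  rw [zero_mul] at hpow
  simp only [iterate_shear]
  exact (((hsum.mul_const z.2).smul_const w.1).const_add z.1).prodMk_nhds hpow

variable [MeasurableSpace E] [BorelSpace E]

theorem measurable_shear (w : E × ℝ) : Measurable (shear w) :=
  (continuous_uncurry_shear.comp (Continuous.prodMk_right w)).measurable

theorem map_shear_prod_le {μ : Measure E} [SFinite μ] [μ.IsAddRightInvariant] {η : Measure ℝ}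
    [SFinite η] {ρ : ℝ≥0∞} {w : E × ℝ} (hη : η.map (w.2 * ·) ≤ ρ • η) :
    (μ.prod η).map (shear w) ≤ ρ • μ.prod η := by
  refine Measure.le_iff.2 fun A hA => ?_
  rw [Measure.map_apply (measurable_shear w) hA,
    Measure.prod_apply_symm (measurable_shear w hA), ← Measure.prod_smul_right,
    Measure.prod_apply_symm hA]
  calc ∫⁻ t, μ ((fun x => (x, t)) ⁻¹' (shear w ⁻¹' A)) ∂η
      = ∫⁻ t, μ ((fun x => (x, w.2 * t)) ⁻¹' A) ∂η :=
        lintegral_congr fun t =>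
          measure_preimage_add_right μ (t • w.1) ((fun x => (x, w.2 * t)) ⁻¹' A)
    _ = ∫⁻ t, μ ((fun x => (x, t)) ⁻¹' A) ∂(η.map (w.2 * ·)) :=
        (lintegral_map (measurable_measure_prodMk_right hA) (measurable_const_mul w.2)).symm
    _ ≤ ∫⁻ t, μ ((fun x => (x, t)) ⁻¹' A) ∂(ρ • η) := lintegral_mono' hη le_rfl

theorem eLpNorm_le_shear_sub [SecondCountableTopology E] {F : Type*} [NormedAddCommGroup F]
    {μ : Measure E} [SFinite μ] [μ.IsAddRightInvariant] {η : Measure ℝ} [SFinite η]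
    {ρ p : ℝ≥0∞} {w : E × ℝ} (hη : η.map (w.2 * ·) ≤ ρ • η) (hw : |w.2| < 1) (hp : 1 ≤ p)
    {v : E × ℝ → F} (hv : Continuous v) (hv0 : ∀ x, v (x, 0) = 0) :
    eLpNorm v p (μ.prod η) ≤
      (1 - ρ ^ p.toReal⁻¹)⁻¹ * eLpNorm (v ∘ shear w - v) p (μ.prod η) := by
  refine eLpNorm_le_of_tendsto_comp_iterate (measurable_shear w) (map_shear_prod_le hη)
    hv.aestronglyMeasurable hp (ae_of_all _ fun z => ?_)
  rw [← hv0]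
  exact (hv.tendsto _).comp (tendsto_iterate_shear hw z)

end Shear

section PowerWeight

/-- The measure `|t| ^ (-σ) dt` on `ℝ`. The absolute value makes it homogeneous under all
dilations, and is invisible once the measure is restricted to `(0, M]`. -/
noncomputable def powerWeight (σ : ℝ) : Measure ℝ :=
  volume.withDensity fun t => ENNReal.ofReal (|t| ^ (-σ))

instance (σ : ℝ) : SFinite (powerWeight σ) := by
  unfold powerWeight; infer_instance

theorem map_mul_powerWeight (σ : ℝ) {l : ℝ} (hl : l ≠ 0) :
    (powerWeight σ).map (l * ·) = ENNReal.ofReal (|l| ^ (σ - 1)) • powerWeight σ := by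
  have hm : Measurable (l * · : ℝ → ℝ) := measurable_const_mul l
  have hl' : 0 < |l| := abs_pos.2 hl
  have hdensity (t : ℝ) : ENNReal.ofReal (|t| ^ (-σ)) =
      ENNReal.ofReal (|l| ^ σ) * ENNReal.ofReal (|l * t| ^ (-σ)) := by
    rw [← ENNReal.ofReal_mul (by positivity), abs_mul, Real.mul_rpow hl'.le (abs_nonneg t),
      ← mul_assoc, ← Real.rpow_add hl', add_neg_cancel, Real.rpow_zero, one_mul]
  have hjacobian : ENNReal.ofReal (|l| ^ σ) * ENNReal.ofReal |l⁻¹| =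
      ENNReal.ofReal (|l| ^ (σ - 1)) := by
    rw [← ENNReal.ofReal_mul (by positivity), abs_inv, Real.rpow_sub_one hl'.ne', div_eq_mul_inv]
  ext A hA
  calc (powerWeight σ).map (l * ·) A
      = ∫⁻ t in (l * ·) ⁻¹' A,
          ENNReal.ofReal (|l| ^ σ) * ENNReal.ofReal (|l * t| ^ (-σ)) := by
        rw [Measure.map_apply hm hA, powerWeight, withDensity_apply _ (hm hA)]
        exact lintegral_congr hdensity
    _ = ∫⁻ t in A, ENNReal.ofReal (|l| ^ σ) * ENNReal.ofReal (|t| ^ (-σ))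
          ∂(volume.map (l * ·)) := (setLIntegral_map hA
          (f := fun t => ENNReal.ofReal (|l| ^ σ) * ENNReal.ofReal (|t| ^ (-σ)))
          (by fun_prop) hm).symm
    _ = (ENNReal.ofReal (|l| ^ (σ - 1)) • powerWeight σ) A := by
        rw [Real.map_volume_mul_left hl, Measure.restrict_smul, lintegral_smul_measure,
          lintegral_const_mul _ (by fun_prop), Measure.smul_apply, powerWeight,
          withDensity_apply _ hA, smul_eq_mul, smul_eq_mul, ← mul_assoc,
          mul_comm (ENNReal.ofReal |l⁻¹|), hjacobian]

theorem map_mul_restrict_powerWeight_le (σ M : ℝ) {l : ℝ} (hl0 : 0 < l) (hl1 : l ≤ 1) :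
    ((powerWeight σ).restrict (Ioc 0 M)).map (l * ·) ≤
      ENNReal.ofReal (l ^ (σ - 1)) • (powerWeight σ).restrict (Ioc 0 M) := by
  have hsub : Ioc 0 M ⊆ (l * ·) ⁻¹' Ioc 0 M := fun t ht =>
    ⟨mul_pos hl0 ht.1, (mul_le_of_le_one_left ht.1.le hl1).trans ht.2⟩
  calc ((powerWeight σ).restrict (Ioc 0 M)).map (l * ·)
      ≤ ((powerWeight σ).restrict ((l * ·) ⁻¹' Ioc 0 M)).map (l * ·) :=
        Measure.map_mono (Measure.restrict_mono hsub le_rfl) (measurable_const_mul l)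
    _ = ENNReal.ofReal (l ^ (σ - 1)) • (powerWeight σ).restrict (Ioc 0 M) := by
        rw [← Measure.restrict_map (measurable_const_mul l) measurableSet_Ioc,
          map_mul_powerWeight σ hl0.ne', abs_of_pos hl0, Measure.restrict_smul]

theorem setLIntegral_powerWeight (σ M : ℝ) (f : ℝ → ℝ≥0∞) :
    ∫⁻ t in Ioc 0 M, f t ∂powerWeight σ =
      ∫⁻ t in Ioc 0 M, ENNReal.ofReal (t ^ (-σ)) * f t := by
  rw [powerWeight, setLIntegral_withDensity_eq_setLIntegral_mul_non_measurable _ (by fun_prop) _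
    measurableSet_Ioc (ae_of_all _ fun _ => ENNReal.ofReal_lt_top)]
  refine setLIntegral_congr_fun measurableSet_Ioc fun t ht => ?_
  simp only [Pi.mul_apply, abs_of_pos ht.1]

variable {E : Type*} [MeasurableSpace E]

/-- The measure `t ^ (-σ) dμ(x) dt` on the stripe `E × (0, M]`, seen as a measure on `E × ℝ`. Its
`L^p` norm for `σ = p * s` is the left-hand side of the Hardy inequality. -/
noncomputable def weightedStripe (μ : Measure E) (M σ : ℝ) : Measure (E × ℝ) :=
  μ.prod ((powerWeight σ).restrict (Ioc 0 M))

instance (μ : Measure E) [SFinite μ] (M σ : ℝ) : SFinite (weightedStripe μ M σ) := by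
  unfold weightedStripe; infer_instance

theorem ae_weightedStripe_mem_Ioc (μ : Measure E) (M σ : ℝ) :
    ∀ᵐ z ∂weightedStripe μ M σ, z.2 ∈ Ioc 0 M :=
  Measure.quasiMeasurePreserving_snd.ae (ae_restrict_mem measurableSet_Ioc)

theorem lintegral_weightedStripe (μ : Measure E) (M σ : ℝ) {f : E × ℝ → ℝ≥0∞}
    (hf : Measurable f) :
    ∫⁻ z, f z ∂weightedStripe μ M σ =
      ∫⁻ x, (∫⁻ t in Ioc 0 M, ENNReal.ofReal (t ^ (-σ)) * f (x, t)) ∂μ := by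
  rw [weightedStripe, lintegral_prod _ hf.aemeasurable]
  exact lintegral_congr fun _ => setLIntegral_powerWeight σ M _

theorem lintegral_weightedStripe_le (μ : Measure E) (M σ : ℝ) (f : E × ℝ → ℝ≥0∞) :
    ∫⁻ z, f z ∂weightedStripe μ M σ ≤
      ∫⁻ x, (∫⁻ t in Ioc 0 M, ENNReal.ofReal (t ^ (-σ)) * f (x, t)) ∂μ :=
  (lintegral_prod_le f).trans_eq (lintegral_congr fun _ => setLIntegral_powerWeight σ M _)

end PowerWeight

section Interaction

theorem lintegral_comp_add_smul {X : Type*} [NormedAddCommGroup X] [NormedSpace ℝ X]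
    [FiniteDimensional ℝ X] [MeasurableSpace X] [BorelSpace X] (μ : Measure X)
    [μ.IsAddHaarMeasure] (f : X → ℝ≥0∞) (a : X) {r : ℝ} (hr : r ≠ 0) :
    ∫⁻ y, f (a + r • y) ∂μ =
      ENNReal.ofReal |(r ^ Module.finrank ℝ X)⁻¹| * ∫⁻ y, f y ∂μ :=
  calc ∫⁻ y, f (a + r • y) ∂μ = ∫⁻ y, f (a + y) ∂(μ.map (r • ·)) :=
        ((Homeomorph.smulOfNeZero r hr).measurableEmbedding.lintegral_map fun y => f (a + y)).symm
    _ = ENNReal.ofReal |(r ^ Module.finrank ℝ X)⁻¹| * ∫⁻ y, f y ∂μ := by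
        rw [Measure.map_addHaar_smul μ hr, lintegral_smul_measure, lintegral_add_left_eq_self,
          smul_eq_mul]

variable {E : Type*} [NormedAddCommGroup E]

/-- The points of the stripe `E × (0, M]` that interact with `z`: those in the Euclidean ball of
radius `ϑ * z.2` around `z`. The ball is written out because `E × ℝ` carries the sup norm. -/
def interactionBall (M ϑ : ℝ) (z : E × ℝ) : Set (E × ℝ) :=
  {w | w.2 ∈ Ioc 0 M ∧ dist w.1 z.1 ^ 2 + (w.2 - z.2) ^ 2 < (ϑ * z.2) ^ 2}

theorem measurableSet_interactionBall [MeasurableSpace E] [BorelSpace E] (M ϑ : ℝ)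
    (z : E × ℝ) : MeasurableSet (interactionBall M ϑ z) := by
  have hball : IsOpen {w : E × ℝ | dist w.1 z.1 ^ 2 + (w.2 - z.2) ^ 2 < (ϑ * z.2) ^ 2} :=
    isOpen_lt (by fun_prop) (by fun_prop)
  exact (measurable_snd measurableSet_Ioc).inter hball.measurableSet

variable [NormedSpace ℝ E]

theorem shear_mem_interactionBall {M ϑ δ : ℝ} (hδ1 : 4 * δ ≤ 1) (hδϑ : 4 * δ ≤ ϑ)
    {w z : E × ℝ} (hz : z.2 ∈ Ioc 0 M) (hw : w ∈ ball ((0 : E), 1 - 2 * δ) δ) :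
    shear w z ∈ interactionBall M ϑ z := by
  obtain ⟨hz0, hzM⟩ := hz
  rw [← ball_prod_same, Real.ball_eq_Ioo] at hw
  obtain ⟨hb, hl_lower, hl_upper⟩ := hw
  rw [mem_ball_zero_iff] at hb
  have hdist : dist (shear w z).1 z.1 = z.2 * ‖w.1‖ := by
    rw [shear, dist_self_add_left, norm_smul, Real.norm_of_nonneg hz0.le]
  have hparam : ‖w.1‖ ^ 2 + (w.2 - 1) ^ 2 < ϑ ^ 2 := by
    nlinarith [norm_nonneg w.1]
  refine ⟨⟨mul_pos (by linarith) hz0, ?_⟩, ?_⟩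
  · exact (mul_le_of_le_one_left hz0.le (by linarith [norm_nonneg w.1])).trans hzM
  · calc dist (shear w z).1 z.1 ^ 2 + ((shear w z).2 - z.2) ^ 2
        = (‖w.1‖ ^ 2 + (w.2 - 1) ^ 2) * z.2 ^ 2 := by rw [hdist, shear]; ring
      _ < ϑ ^ 2 * z.2 ^ 2 := by gcongr
      _ = (ϑ * z.2) ^ 2 := by ring

variable [MeasurableSpace E] [BorelSpace E]

theorem setLIntegral_shear_le [FiniteDimensional ℝ E] (μ : Measure E) [μ.IsAddHaarMeasure]
    {M ϑ δ : ℝ} (hδ1 : 4 * δ ≤ 1) (hδϑ : 4 * δ ≤ ϑ) {z : E × ℝ} (hz : z.2 ∈ Ioc 0 M)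
    (f : E × ℝ → ℝ≥0∞) :
    ∫⁻ w in ball ((0 : E), 1 - 2 * δ) δ, f (shear w z) ∂μ.prod volume ≤
      ENNReal.ofReal (z.2 ^ Module.finrank ℝ (E × ℝ))⁻¹ *
        ∫⁻ y in interactionBall M ϑ z, f y ∂μ.prod volume := by
  have hz0 := hz.1
  calc ∫⁻ w in ball ((0 : E), 1 - 2 * δ) δ, f (shear w z) ∂μ.prod volume
      ≤ ∫⁻ w in ball ((0 : E), 1 - 2 * δ) δ,
          (interactionBall M ϑ z).indicator f (shear w z) ∂μ.prod volume :=
        setLIntegral_mono' measurableSet_ball fun w hw => by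
          rw [indicator_of_mem (shear_mem_interactionBall hδ1 hδϑ hz hw)]
    _ ≤ ∫⁻ w, (interactionBall M ϑ z).indicator f ((z.1, 0) + z.2 • w) ∂μ.prod volume := by
        simp only [← shear_eq_add_smul]
        exact setLIntegral_le_lintegral _ _
    _ = _ := by
        rw [lintegral_comp_add_smul (μ.prod volume) _ _ hz0.ne', abs_of_pos (by positivity),
          lintegral_indicator (measurableSet_interactionBall M ϑ z)]

end Interaction

section Hardy

variable {E F : Type*} [NormedAddCommGroup E] [NormedSpace ℝ E] [MeasurableSpace E]
  [BorelSpace E] [NormedAddCommGroup F]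

theorem lintegral_rpow_enorm_le_shear_sub [SecondCountableTopology E] (μ : Measure E) [SFinite μ]
    [μ.IsAddRightInvariant] {p : ℝ≥0} (hp : 1 ≤ p) {σ l₀ : ℝ} (hσ : 1 ≤ σ) (hl₀ : l₀ < 1)
    {w : E × ℝ} (hw0 : 0 < w.2) (hwl : w.2 ≤ l₀) (M : ℝ) {v : E × ℝ → F} (hv : Continuous v)
    (hv0 : ∀ x, v (x, 0) = 0) :
    ∫⁻ z, ‖v z‖ₑ ^ (p : ℝ) ∂weightedStripe μ M σ ≤
      (1 - ENNReal.ofReal (l₀ ^ (σ - 1)) ^ (p : ℝ)⁻¹)⁻¹ ^ (p : ℝ) *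
        ∫⁻ z, ‖v (shear w z) - v z‖ₑ ^ (p : ℝ) ∂weightedStripe μ M σ := by
  have hp0 : p ≠ 0 := (zero_lt_one.trans_le hp).ne'
  have hnorm : eLpNorm v p (weightedStripe μ M σ) ≤
      (1 - ENNReal.ofReal (w.2 ^ (σ - 1)) ^ (p : ℝ)⁻¹)⁻¹ *
        eLpNorm (v ∘ shear w - v) p (weightedStripe μ M σ) :=
    eLpNorm_le_shear_sub (map_mul_restrict_powerWeight_le σ M hw0 (hwl.trans hl₀.le))
      (by rw [abs_of_pos hw0]; linarith) (by exact_mod_cast hp) hv hv0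
  have hpow := ENNReal.rpow_le_rpow hnorm p.coe_nonneg
  rw [ENNReal.mul_rpow_of_nonneg _ _ p.coe_nonneg, eLpNorm_nnreal_pow_eq_lintegral hp0,
    eLpNorm_nnreal_pow_eq_lintegral hp0] at hpow
  refine hpow.trans ?_
  gcongr
  rfl

/-- The integral of `‖v y - v z‖ ^ p` over interacting pairs of points of the stripe, in which
`z = (x, t)` carries the weight `t ^ (-σ - dim (E × ℝ))`. For `σ = p * s` this is the localized
seminorm up to the factor `ϑ ^ (dim (E × ℝ) + p * s)`. -/
noncomputable def interactionEnergy (μ : Measure E) (M ϑ σ p : ℝ) (v : E × ℝ → F) : ℝ≥0∞ :=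
  ∫⁻ z, ENNReal.ofReal (z.2 ^ Module.finrank ℝ (E × ℝ))⁻¹ *
    ∫⁻ y in interactionBall M ϑ z, ‖v y - v z‖ₑ ^ p ∂μ.prod volume ∂weightedStripe μ M σ

variable [FiniteDimensional ℝ E] (μ : Measure E) [μ.IsAddHaarMeasure]

theorem lintegral_setLIntegral_shear_sub_le_interactionEnergy {p : ℝ} {σ ϑ δ : ℝ}
    (hδ1 : 4 * δ ≤ 1) (hδϑ : 4 * δ ≤ ϑ) (M : ℝ) {v : E × ℝ → F} (hv : Continuous v) :
    ∫⁻ w in ball ((0 : E), 1 - 2 * δ) δ, ∫⁻ z, ‖v (shear w z) - v z‖ₑ ^ p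
        ∂weightedStripe μ M σ ∂μ.prod volume ≤
      interactionEnergy μ M ϑ σ p v := by
  have hcont : Continuous fun q : (E × ℝ) × (E × ℝ) => ‖v (shear q.1 q.2) - v q.2‖ₑ ^ p :=
    ENNReal.continuous_rpow_const.comp
      ((hv.comp continuous_uncurry_shear).sub (hv.comp continuous_snd)).enorm
  rw [lintegral_lintegral_swap hcont.measurable.aemeasurable]
  refine lintegral_mono_ae ?_
  filter_upwards [ae_weightedStripe_mem_Ioc μ M σ] with z hz
  exact setLIntegral_shear_le μ hδ1 hδϑ hz fun y => ‖v y - v z‖ₑ ^ p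

theorem exists_lintegral_rpow_enorm_le_interactionEnergy {p : ℝ≥0} (hp : 1 ≤ p) {σ ϑ : ℝ}
    (hσ : 1 < σ) (hϑ : 0 < ϑ) :
    ∃ C : ℝ≥0, ∀ (M : ℝ) (v : E × ℝ → F), Continuous v → (∀ x, v (x, 0) = 0) →
      ∫⁻ z, ‖v z‖ₑ ^ (p : ℝ) ∂weightedStripe μ M σ ≤ C * interactionEnergy μ M ϑ σ p v := by
  obtain ⟨δ, hδ, hδ1, hδϑ⟩ : ∃ δ : ℝ, 0 < δ ∧ 4 * δ ≤ 1 ∧ 4 * δ ≤ ϑ :=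
    ⟨min 1 ϑ / 4, by positivity, by linarith [min_le_left 1 ϑ], by linarith [min_le_right 1 ϑ]⟩
  -- On this ball of the sup norm the dilation factor stays between `1 - 3 * δ` and `1 - δ`.
  set W := ball ((0 : E), 1 - 2 * δ) δ
  have hW0 : (μ.prod volume) W ≠ 0 := (measure_ball_pos _ _ hδ).ne'
  have hWtop : (μ.prod volume) W ≠ ⊤ := measure_ball_lt_top.ne
  set c := (1 - ENNReal.ofReal ((1 - δ) ^ (σ - 1)) ^ (p : ℝ)⁻¹)⁻¹ ^ (p : ℝ)
  have hc : c ≠ ⊤ := by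
    refine ENNReal.rpow_ne_top_of_nonneg p.coe_nonneg (ENNReal.inv_ne_top.2 (tsub_pos_of_lt ?_).ne')
    refine ENNReal.rpow_lt_one (ENNReal.ofReal_lt_one.2 ?_) (by positivity)
    exact Real.rpow_lt_one (by linarith) (by linarith) (by linarith)
  refine ⟨(((μ.prod volume) W)⁻¹ * c).toNNReal, fun M v hv hv0 => ?_⟩
  rw [ENNReal.coe_toNNReal (ENNReal.mul_ne_top (ENNReal.inv_ne_top.2 hW0) hc), mul_assoc,
    ← ENNReal.mul_le_iff_le_inv hW0 hWtop]
  calc (μ.prod volume) W * ∫⁻ z, ‖v z‖ₑ ^ (p : ℝ) ∂weightedStripe μ M σ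
      = ∫⁻ _ in W, ∫⁻ z, ‖v z‖ₑ ^ (p : ℝ) ∂weightedStripe μ M σ ∂μ.prod volume := by
        rw [setLIntegral_const, mul_comm]
    _ ≤ ∫⁻ w in W, c * ∫⁻ z, ‖v (shear w z) - v z‖ₑ ^ (p : ℝ) ∂weightedStripe μ M σ
          ∂μ.prod volume := by
        refine setLIntegral_mono' measurableSet_ball fun w hw => ?_
        have hl : |w.2 - (1 - 2 * δ)| < δ := (le_max_right _ _).trans_lt hw
        obtain ⟨hl_lower, hl_upper⟩ := abs_lt.1 hl
        exact lintegral_rpow_enorm_le_shear_sub μ hp hσ.le (by linarith) (by linarith)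
          (by linarith) M hv hv0
    _ = c * ∫⁻ w in W, ∫⁻ z, ‖v (shear w z) - v z‖ₑ ^ (p : ℝ) ∂weightedStripe μ M σ
          ∂μ.prod volume := lintegral_const_mul' _ _ hc
    _ ≤ c * interactionEnergy μ M ϑ σ p v := by
        gcongr
        exact lintegral_setLIntegral_shear_sub_le_interactionEnergy μ hδ1 hδϑ M hv

end Hardy

section StripeSemi

theorem setLIntegral_prod_le {α β : Type*} [MeasurableSpace α] [MeasurableSpace β]
    (μ : Measure α) (ν : Measure β) {A : Set (α × β)} (hA : MeasurableSet A)
    (f : α × β → ℝ≥0∞) :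
    ∫⁻ z in A, f z ∂μ.prod ν ≤ ∫⁻ x, ∫⁻ y in Prod.mk x ⁻¹' A, f (x, y) ∂ν ∂μ := by
  rw [← lintegral_indicator hA]
  refine (lintegral_prod_le _).trans_eq (lintegral_congr fun x => ?_)
  rw [← lintegral_indicator (measurable_prodMk_left hA)]
  rfl

theorem ofReal_abs_rpow {p : ℝ} (hp : 0 ≤ p) (a : ℝ) :
    ENNReal.ofReal (|a| ^ p) = ‖a‖ₑ ^ p := by
  rw [Real.enorm_eq_ofReal_abs, ENNReal.ofReal_rpow_of_nonneg (abs_nonneg a) hp]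

variable {d : ℕ} {M p s : ℝ} {u : EuclideanSpace ℝ (Fin (d - 1)) → ℝ → ℝ}
  {v : EuclideanSpace ℝ (Fin (d - 1)) × ℝ → ℝ}

theorem lintegral_rpow_enorm_weightedStripe (hp : 0 ≤ p) (σ : ℝ) (hv : Continuous v)
    (hvu : ∀ x, ∀ t ∈ Ioc 0 M, v (x, t) = u x t) :
    ∫⁻ z, ‖v z‖ₑ ^ p ∂weightedStripe volume M σ =
      ∫⁻ x, ∫⁻ t in Ioc 0 M, ENNReal.ofReal (|u x t| ^ p / t ^ σ) := by
  have hmeas : Measurable fun z => ‖v z‖ₑ ^ p :=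
    (ENNReal.continuous_rpow_const.comp hv.enorm).measurable
  rw [lintegral_weightedStripe volume M σ hmeas]
  refine lintegral_congr fun x => setLIntegral_congr_fun measurableSet_Ioc fun t ht => ?_
  have ht0 := ht.1
  rw [hvu x t ht, ← ofReal_abs_rpow hp, ← ENNReal.ofReal_mul (by positivity),
    Real.rpow_neg ht0.le, div_eq_inv_mul]

theorem setLIntegral_interactionBall_le (hp : 0 ≤ p) (ϑ : ℝ) {k : ℝ} (hk : 0 ≤ k)
    (hvu : ∀ x, ∀ t ∈ Ioc 0 M, v (x, t) = u x t) (x : EuclideanSpace ℝ (Fin (d - 1))) {t : ℝ}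
    (ht : t ∈ Ioc 0 M) :
    ENNReal.ofReal k⁻¹ *
        ∫⁻ y in interactionBall M ϑ (x, t), ‖v y - v (x, t)‖ₑ ^ p ∂volume.prod volume ≤
      ∫⁻ y, ∫⁻ r in Ioc 0 M ∩ {r : ℝ | dist y x ^ 2 + (r - t) ^ 2 < (ϑ * t) ^ 2},
        ENNReal.ofReal (|u y r - u x t| ^ p / k) := by
  have hball := measurableSet_interactionBall M ϑ (x, t)
  calc _ ≤ ENNReal.ofReal k⁻¹ * ∫⁻ y, ∫⁻ r in Prod.mk y ⁻¹' interactionBall M ϑ (x, t),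
        ‖v (y, r) - v (x, t)‖ₑ ^ p := by
        gcongr
        exact setLIntegral_prod_le volume volume hball fun y => ‖v y - v (x, t)‖ₑ ^ p
    _ = ∫⁻ y, ∫⁻ r in Prod.mk y ⁻¹' interactionBall M ϑ (x, t),
        ENNReal.ofReal (|u y r - u x t| ^ p / k) := by
        rw [← lintegral_const_mul' _ _ ENNReal.ofReal_ne_top]
        refine lintegral_congr fun y => ?_
        rw [← lintegral_const_mul' _ _ ENNReal.ofReal_ne_top]
        refine setLIntegral_congr_fun (measurable_prodMk_left hball) fun r hr => ?_
        rw [hvu x t ht, hvu y r hr.1, ← ofReal_abs_rpow hp, ← ENNReal.ofReal_mul (by positivity),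
          div_eq_inv_mul]

theorem interactionEnergy_le_stripeSemi (hd : 1 ≤ d) (hp : 0 ≤ p) {ϑ : ℝ} (hϑ : 0 < ϑ)
    (hvu : ∀ x, ∀ t ∈ Ioc 0 M, v (x, t) = u x t) :
    interactionEnergy volume M ϑ (p * s) p v ≤
      ENNReal.ofReal (ϑ ^ (d + p * s)) * stripeSemi d (Ioc 0 M) ϑ p s u := by
  have hdim : Module.finrank ℝ (EuclideanSpace ℝ (Fin (d - 1)) × ℝ) = d := by
    rw [Module.finrank_prod, finrank_euclideanSpace_fin, Module.finrank_self,
      Nat.sub_add_cancel hd]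
  have hweight {t : ℝ} (ht : 0 < t) :
      ENNReal.ofReal (t ^ (-(p * s))) * ENNReal.ofReal (t ^ d)⁻¹ =
        ENNReal.ofReal (ϑ ^ (d + p * s)) * ENNReal.ofReal ((ϑ * t) ^ (d + p * s))⁻¹ := by
    rw [← ENNReal.ofReal_mul (by positivity), ← ENNReal.ofReal_mul (by positivity),
      Real.mul_rpow hϑ.le ht.le, Real.rpow_neg ht.le, Real.rpow_add ht, Real.rpow_natCast]
    field_simp
  refine (lintegral_weightedStripe_le volume M (p * s) _).trans ?_
  rw [stripeSemi, ← lintegral_const_mul' _ _ ENNReal.ofReal_ne_top]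
  refine lintegral_mono fun x => ?_
  rw [← lintegral_const_mul' _ _ ENNReal.ofReal_ne_top]
  refine setLIntegral_mono' measurableSet_Ioc fun t ht => ?_
  have hϑt : 0 ≤ ϑ * t := mul_nonneg hϑ.le ht.1.le
  rw [hdim, ← mul_assoc, hweight ht.1, mul_assoc]
  gcongr
  exact setLIntegral_interactionBall_le hp ϑ (Real.rpow_nonneg hϑt _) hvu x ht

end StripeSemi

theorem stmt_10_general {d : ℕ} (hd : 1 ≤ d) {p s ϑ : ℝ} (hp : 1 ≤ p) (hsp : 1 < s * p)
    (hϑ : 0 < ϑ) :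
    ∃ C : ℝ, 0 < C ∧ ∀ (M : ℝ), 0 < M →
      ∀ u : EuclideanSpace ℝ (Fin (d - 1)) → ℝ → ℝ,
        ContinuousOn (fun q : EuclideanSpace ℝ (Fin (d - 1)) × ℝ => u q.1 q.2)
          {q : EuclideanSpace ℝ (Fin (d - 1)) × ℝ | q.2 ∈ Icc 0 M} →
        (∀ x' : EuclideanSpace ℝ (Fin (d - 1)), u x' 0 = 0) →
        (∫⁻ x' : EuclideanSpace ℝ (Fin (d - 1)), ∫⁻ xd in Ioc (0 : ℝ) M,
            ENNReal.ofReal (|u x' xd| ^ p / xd ^ (p * s))) ≤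
          ENNReal.ofReal (C ^ p) * stripeSemi d (Ioc 0 M) ϑ p s u := by
  have hp0 : 0 < p := zero_lt_one.trans_le hp
  lift p to ℝ≥0 using hp0.le
  obtain ⟨C, hC⟩ := exists_lintegral_rpow_enorm_le_interactionEnergy (F := ℝ)
    (volume : Measure (EuclideanSpace ℝ (Fin (d - 1)))) hp (mul_comm s p ▸ hsp) hϑ
  set B : ℝ := C * ϑ ^ (d + p * s)
  have hB : 0 < B + 1 := add_pos_of_nonneg_of_pos (by positivity) one_pos
  refine ⟨(B + 1) ^ (p : ℝ)⁻¹, Real.rpow_pos_of_pos hB _, fun M hM u hu hu0 => ?_⟩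
  set v : EuclideanSpace ℝ (Fin (d - 1)) × ℝ → ℝ := fun z => u z.1 (projIcc 0 M hM.le z.2)
  have hproj : Continuous fun z : EuclideanSpace ℝ (Fin (d - 1)) × ℝ =>
      (z.1, (projIcc 0 M hM.le z.2 : ℝ)) := by fun_prop
  have hv : Continuous v := hu.comp_continuous hproj fun z => (projIcc 0 M hM.le z.2).2
  have hv0 (x) : v (x, 0) = 0 := by simp [v, hu0]
  have hvu (x) (t) (ht : t ∈ Ioc 0 M) : v (x, t) = u x t := by
    simp only [v, projIcc_of_mem hM.le (Ioc_subset_Icc_self ht)]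
  calc _ = ∫⁻ z, ‖v z‖ₑ ^ (p : ℝ) ∂weightedStripe volume M (p * s) :=
        (lintegral_rpow_enorm_weightedStripe p.coe_nonneg _ hv hvu).symm
    _ ≤ C * interactionEnergy volume M ϑ (p * s) p v := hC M v hv hv0
    _ ≤ C * (ENNReal.ofReal (ϑ ^ (d + p * s)) * stripeSemi d (Ioc 0 M) ϑ p s u) := by
        gcongr
        exact interactionEnergy_le_stripeSemi hd p.coe_nonneg hϑ hvu
    _ = ENNReal.ofReal B * stripeSemi d (Ioc 0 M) ϑ p s u := by
        rw [← mul_assoc, ENNReal.ofReal_mul C.coe_nonneg, ENNReal.ofReal_coe_nnreal]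
    _ ≤ _ := by
        rw [Real.rpow_inv_rpow hB.le hp0.ne']
        gcongr
        linarith

/-- Nonlocal Hardy-type inequality on the stripe `ℝ^{d-1} × (0,M]`: for Lipschitz
`u` vanishing on the bottom boundary, the weighted `L^p` norm with weight
`x_d^{-ps}` is controlled by the localized nonlocal seminorm, with a constant
independent of `M`. -/
theorem stmt_10 (d : ℕ) (hd : 2 ≤ d) (p s ϑ : ℝ) (hp : 1 ≤ p) (hs0 : 0 < s)
    (hs1 : s ≤ 1) (hsp : 1 < s * p) (hϑ0 : 0 < ϑ) (hϑ1 : ϑ ≤ 1) :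
    ∃ C : ℝ, 0 < C ∧ ∀ (M : ℝ), 0 < M →
      ∀ (u : EuclideanSpace ℝ (Fin (d - 1)) → ℝ → ℝ) (K : NNReal),
        LipschitzOnWith K (fun q : EuclideanSpace ℝ (Fin (d - 1)) × ℝ => u q.1 q.2)
          {q : EuclideanSpace ℝ (Fin (d - 1)) × ℝ | q.2 ∈ Set.Icc 0 M} →
        stripeSemi d (Set.Ioc 0 M) ϑ p s u ≠ ⊤ →
        (∀ x' : EuclideanSpace ℝ (Fin (d - 1)), u x' 0 = 0) →
        (∫⁻ x' : EuclideanSpace ℝ (Fin (d - 1)), ∫⁻ xd in Set.Ioc (0:ℝ) M,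
            ENNReal.ofReal (|u x' xd| ^ p / xd ^ (p * s))) ≤
          ENNReal.ofReal (C ^ p) * stripeSemi d (Set.Ioc 0 M) ϑ p s u := by
  obtain ⟨C, hC, hardy⟩ := stmt_10_general (one_le_two.trans hd) hp hsp hϑ0
  exact ⟨C, hC, fun M hM u _ hu _ hu0 => hardy M hM u hu.continuousOn hu0⟩
end

section
/- Let d ≥ 2, p ≥ 1, s ∈ (0,1] with sp > 1. There exists C = C(s, p, d) such that for all M > 0, ϑ ∈ (0,1], and every Lipschitz function u on the closure of ℝ^d_{M+} lying in 𝔚^{s,p}_ϑ(ℝ^d_{M+}), the trace u(·, 0) satisfies ∫_{ℝ^{d-1}} |u(x', 0)|^p dx' ≤ C ( M^{-1} ‖u‖^p_{L^p(ℝ^d_{M+})} + ϑ^{ps-p} M^{ps-1} |u|^p_{𝔚^{s,p}_ϑ(ℝ^d_{M+})} ). -/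
open MeasureTheory
open scoped ENNReal NNReal

/-- The `L^p` norm (to the `p`-th power) on the stripe `ℝ^{d-1} × (0,M]`. -/
noncomputable def stripeLp (d : ℕ) (S : Set ℝ) (p : ℝ)
    (u : EuclideanSpace ℝ (Fin (d - 1)) → ℝ → ℝ) : ℝ≥0∞ :=
  ∫⁻ x' : EuclideanSpace ℝ (Fin (d - 1)), ∫⁻ xd in S, ENNReal.ofReal (|u x' xd| ^ p)

/-!
Put `l = 1 - ϑ / 4`. Since `u (x, l ^ k * t) → u (x, 0)`, Minkowski's inequality in `L^p (0, M]`
bounds `M ^ (1 / p) * |u (x, 0)|` by the norm of `u (x, ·)` plus the sum over `k` of the norms of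
`u (x, l ^ (k + 1) * ·) - u (x, l ^ k * ·)`. A cylinder around `(x, t)` of size `ϑ * t` lies in the
horizons of both `(x, t)` and `(x, l * t)`, and averaging over it bounds
`|u (x, l * t) - u (x, t)| ^ p` by `(ϑ * t) ^ (p * s)` times the energy densities at the two points.
After rescaling, the `k`-th norm decays like `l ^ (k * (p * s - 1) / p)`, a convergent geometric
series because `p * s > 1`; its sum is `O(ϑ⁻¹)`, whence the factor `ϑ ^ (p * s - p)`.
-/

section StripeTrace

open Filter Function Module Set Topology

variable {E F : Type*} [NormedAddCommGroup F]

section Telescoping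

variable {α : Type*} [MeasurableSpace α] {ν : Measure α} {p : ℝ}

lemma eLpNorm'_le_add_tsum_eLpNorm'_sub (hp : 1 ≤ p) {g : ℕ → α → F} {a : α → F}
    (hg : ∀ k, AEStronglyMeasurable (g k) ν)
    (hlim : ∀ᵐ z ∂ν, Tendsto (fun k => g k z) atTop (𝓝 (a z))) :
    eLpNorm' a p ν ≤ eLpNorm' (g 0) p ν + ∑' k, eLpNorm' (g (k + 1) - g k) p ν := by
  have hdiff : ∀ k, AEStronglyMeasurable (g (k + 1) - g k) ν := fun k => (hg (k + 1)).sub (hg k)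
  have hpartial : ∀ n, eLpNorm' (g n) p ν ≤
      eLpNorm' (g 0) p ν + ∑' k, eLpNorm' (g (k + 1) - g k) p ν := fun n =>
    calc eLpNorm' (g n) p ν
        = eLpNorm' (g 0 + ∑ k ∈ Finset.range n, (g (k + 1) - g k)) p ν := by
          rw [Finset.sum_range_sub, add_sub_cancel]
      _ ≤ eLpNorm' (g 0) p ν + eLpNorm' (∑ k ∈ Finset.range n, (g (k + 1) - g k)) p ν :=
          eLpNorm'_add_le (hg 0) (Finset.aestronglyMeasurable_sum _ fun k _ => hdiff k) hp
      _ ≤ eLpNorm' (g 0) p ν + ∑ k ∈ Finset.range n, eLpNorm' (g (k + 1) - g k) p ν := by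
          gcongr
          exact eLpNorm'_sum_le (fun k _ => hdiff k) hp
      _ ≤ eLpNorm' (g 0) p ν + ∑' k, eLpNorm' (g (k + 1) - g k) p ν := by
          gcongr
          exact ENNReal.sum_le_tsum _
  exact (Lp.eLpNorm'_lim_le_liminf_eLpNorm' (by linarith) hg hlim).trans
    (liminf_le_of_frequently_le' (Frequently.of_forall hpartial))

lemma measure_univ_mul_enorm_sub_rpow_le (hp : 1 ≤ p) {g : α → F}
    (hg : AEStronglyMeasurable g ν) (a b : F) :
    ν univ * ‖a - b‖ₑ ^ p ≤
      2 ^ (p - 1) * (∫⁻ z, ‖g z - a‖ₑ ^ p ∂ν + ∫⁻ z, ‖g z - b‖ₑ ^ p ∂ν) := by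
  have hpt : ∀ z, ‖a - b‖ₑ ^ p ≤ 2 ^ (p - 1) * (‖g z - a‖ₑ ^ p + ‖g z - b‖ₑ ^ p) := fun z =>
    calc ‖a - b‖ₑ ^ p ≤ (‖g z - a‖ₑ + ‖g z - b‖ₑ) ^ p := by
          gcongr
          rw [← enorm_neg (g z - a)]
          convert enorm_add_le (-(g z - a)) (g z - b) using 2
          abel
      _ ≤ _ := ENNReal.rpow_add_le_mul_rpow_add_rpow _ _ hp
  have hmeas : AEMeasurable (fun z => ‖g z - a‖ₑ ^ p) ν :=
    (hg.sub aestronglyMeasurable_const).enorm.pow_const p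
  calc ν univ * ‖a - b‖ₑ ^ p = ∫⁻ _, ‖a - b‖ₑ ^ p ∂ν := by rw [lintegral_const, mul_comm]
    _ ≤ ∫⁻ z, 2 ^ (p - 1) * (‖g z - a‖ₑ ^ p + ‖g z - b‖ₑ ^ p) ∂ν := lintegral_mono hpt
    _ = _ := by
      rw [lintegral_const_mul' _ _ (by finiteness), lintegral_add_left' hmeas]

end Telescoping

section HalfLine

/-- The density `h` controls the increments of `f` under the dilation `t ↦ l * t` on `(0, M]`,
with weight `t ^ σ`. -/
def DominatesIncrements (h : ℝ → ℝ≥0∞) (f : ℝ → F) (p σ l M : ℝ) : Prop :=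
  ∀ t ∈ Ioc 0 M, ‖f (l * t) - f t‖ₑ ^ p ≤ ENNReal.ofReal (t ^ σ) * (h t + h (l * t))

variable {f : ℝ → F} {a : F} {h : ℝ → ℝ≥0∞} {p σ l c M : ℝ}

lemma setLIntegral_Ioc_comp_mul_left (hc : 0 < c) (M : ℝ) (h : ℝ → ℝ≥0∞) :
    ∫⁻ t in Ioc 0 M, h (c * t) = ENNReal.ofReal c⁻¹ * ∫⁻ t in Ioc 0 (c * M), h t := by
  have hpre : (c * ·) ⁻¹' Ioc 0 (c * M) = Ioc 0 M := by
    rw [preimage_const_mul_Ioc₀ _ _ hc, zero_div, mul_div_cancel_left₀ _ hc.ne']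
  have hemb : MeasurableEmbedding (c * · : ℝ → ℝ) := measurableEmbedding_mulLeft₀ hc.ne'
  rw [← hpre, ← hemb.lintegral_map, ← hemb.restrict_map, Real.map_volume_mul_left hc.ne',
    Measure.restrict_smul, lintegral_smul_measure, abs_of_pos (inv_pos.2 hc), smul_eq_mul]

lemma setLIntegral_Ioc_comp_mul_left_le (hc₀ : 0 < c) (hc₁ : c ≤ 1) (hM : 0 ≤ M)
    (h : ℝ → ℝ≥0∞) :
    ∫⁻ t in Ioc 0 M, h (c * t) ≤ ENNReal.ofReal c⁻¹ * ∫⁻ t in Ioc 0 M, h t := by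
  rw [setLIntegral_Ioc_comp_mul_left hc₀]
  gcongr
  exact mul_le_of_le_one_left hM hc₁

lemma setLIntegral_enorm_increment_rpow_le (hσ : 0 ≤ σ) (hl₀ : 0 < l) (hl₁ : l ≤ 1)
    (hM : 0 ≤ M) (hh : Measurable h) (hfh : DominatesIncrements h f p σ l M) :
    ∫⁻ t in Ioc 0 M, ‖f (l * t) - f t‖ₑ ^ p ≤
      ENNReal.ofReal (M ^ σ * (1 + l⁻¹)) * ∫⁻ t in Ioc 0 M, h t := by
  have hpt : ∀ t ∈ Ioc 0 M,
      ‖f (l * t) - f t‖ₑ ^ p ≤ ENNReal.ofReal (M ^ σ) * (h t + h (l * t)) := fun t ht =>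
    (hfh t ht).trans (by gcongr; exacts [ht.1.le, ht.2])
  calc ∫⁻ t in Ioc 0 M, ‖f (l * t) - f t‖ₑ ^ p
      ≤ ∫⁻ t in Ioc 0 M, ENNReal.ofReal (M ^ σ) * (h t + h (l * t)) :=
        setLIntegral_mono' measurableSet_Ioc hpt
    _ = ENNReal.ofReal (M ^ σ) * ((∫⁻ t in Ioc 0 M, h t) + ∫⁻ t in Ioc 0 M, h (l * t)) := by
        rw [lintegral_const_mul' _ _ ENNReal.ofReal_ne_top, lintegral_add_left hh]
    _ ≤ ENNReal.ofReal (M ^ σ) *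
          ((∫⁻ t in Ioc 0 M, h t) + ENNReal.ofReal l⁻¹ * ∫⁻ t in Ioc 0 M, h t) := by
        gcongr
        exact setLIntegral_Ioc_comp_mul_left_le hl₀ hl₁ hM h
    _ = ENNReal.ofReal (M ^ σ * (1 + l⁻¹)) * ∫⁻ t in Ioc 0 M, h t := by
        rw [ENNReal.ofReal_mul (by positivity), ENNReal.ofReal_add zero_le_one (by positivity),
          ENNReal.ofReal_one]
        ring

lemma setLIntegral_enorm_increment_comp_mul_rpow_le (hσ : 0 ≤ σ) (hl₀ : 0 < l) (hl₁ : l ≤ 1)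
    (hc₀ : 0 < c) (hc₁ : c ≤ 1) (hM : 0 ≤ M) (hh : Measurable h)
    (hfh : DominatesIncrements h f p σ l M) :
    ∫⁻ t in Ioc 0 M, ‖f (l * (c * t)) - f (c * t)‖ₑ ^ p ≤
      ENNReal.ofReal (c ^ (σ - 1)) *
        (ENNReal.ofReal (M ^ σ * (1 + l⁻¹)) * ∫⁻ t in Ioc 0 M, h t) := by
  have hcM : c * M ≤ M := mul_le_of_le_one_left hM hc₁
  have hfh_c : DominatesIncrements h f p σ l (c * M) := fun t ht =>
    hfh t (Ioc_subset_Ioc_right hcM ht)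
  calc ∫⁻ t in Ioc 0 M, ‖f (l * (c * t)) - f (c * t)‖ₑ ^ p
      = ENNReal.ofReal c⁻¹ * ∫⁻ t in Ioc 0 (c * M), ‖f (l * t) - f t‖ₑ ^ p :=
        setLIntegral_Ioc_comp_mul_left hc₀ M fun t => ‖f (l * t) - f t‖ₑ ^ p
    _ ≤ ENNReal.ofReal c⁻¹ *
          (ENNReal.ofReal ((c * M) ^ σ * (1 + l⁻¹)) * ∫⁻ t in Ioc 0 (c * M), h t) := by
        gcongr
        exact setLIntegral_enorm_increment_rpow_le hσ hl₀ hl₁ (by positivity) hh hfh_c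
    _ ≤ ENNReal.ofReal c⁻¹ *
          (ENNReal.ofReal ((c * M) ^ σ * (1 + l⁻¹)) * ∫⁻ t in Ioc 0 M, h t) := by
        gcongr
    _ = _ := by
        rw [← mul_assoc, ← mul_assoc, ← ENNReal.ofReal_mul (by positivity),
          ← ENNReal.ofReal_mul (by positivity), Real.mul_rpow hc₀.le hM,
          Real.rpow_sub_one hc₀.ne']
        congr 2
        field_simp

lemma eLpNorm'_increment_comp_pow_mul_le (hp : 0 < p) (hσ : 0 ≤ σ) (hl₀ : 0 < l) (hl₁ : l ≤ 1)
    (hM : 0 ≤ M) (hh : Measurable h) (hfh : DominatesIncrements h f p σ l M) (k : ℕ) :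
    eLpNorm' (fun t => f (l ^ (k + 1) * t) - f (l ^ k * t)) p (volume.restrict (Ioc 0 M)) ≤
      ENNReal.ofReal (l ^ ((σ - 1) / p)) ^ k *
        (ENNReal.ofReal (M ^ σ * (1 + l⁻¹)) * ∫⁻ t in Ioc 0 M, h t) ^ (1 / p) := by
  have hscale : ENNReal.ofReal ((l ^ k) ^ (σ - 1)) ^ (1 / p) =
      ENNReal.ofReal (l ^ ((σ - 1) / p)) ^ k := by
    rw [ENNReal.ofReal_rpow_of_nonneg (by positivity) (by positivity),
      ← ENNReal.ofReal_pow (by positivity), ← Real.rpow_mul (by positivity), mul_one_div,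
      ← Real.rpow_pow_comm hl₀.le]
  rw [← hscale, ← ENNReal.mul_rpow_of_nonneg _ _ (by positivity), eLpNorm'_eq_lintegral_enorm]
  gcongr
  simpa only [pow_succ', mul_assoc] using setLIntegral_enorm_increment_comp_mul_rpow_le
    hσ hl₀ hl₁ (pow_pos hl₀ k) (pow_le_one₀ hl₀.le hl₁) hM hh hfh

lemma tsum_ofReal_pow {ρ : ℝ} (hρ₀ : 0 ≤ ρ) (hρ₁ : ρ < 1) :
    ∑' k : ℕ, ENNReal.ofReal ρ ^ k = ENNReal.ofReal (1 - ρ)⁻¹ := by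
  rw [ENNReal.tsum_geometric, ENNReal.ofReal_inv_of_pos (by linarith), ENNReal.ofReal_sub _ hρ₀,
    ENNReal.ofReal_one]

lemma tendsto_comp_pow_mul_of_tendsto_nhdsGT_zero (hl₀ : 0 < l) (hl₁ : l < 1)
    (hfa : Tendsto f (𝓝[>] 0) (𝓝 a)) {t : ℝ} (ht : 0 < t) :
    Tendsto (fun k : ℕ => f (l ^ k * t)) atTop (𝓝 a) := by
  refine hfa.comp (tendsto_nhdsWithin_iff.2 ⟨?_, Eventually.of_forall fun k => ?_⟩)
  · simpa using (tendsto_pow_atTop_nhds_zero_of_lt_one hl₀.le hl₁).mul_const t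
  · exact mul_pos (pow_pos hl₀ k) ht

lemma enorm_limit_mul_rpow_le_eLpNorm'_add (hp : 1 ≤ p) (hσ : 1 < σ) (hl₀ : 0 < l) (hl₁ : l < 1)
    (hM : 0 ≤ M) (hf : StronglyMeasurable f) (hh : Measurable h)
    (hfa : Tendsto f (𝓝[>] 0) (𝓝 a)) (hfh : DominatesIncrements h f p σ l M) :
    ‖a‖ₑ * ENNReal.ofReal M ^ (1 / p) ≤
      eLpNorm' f p (volume.restrict (Ioc 0 M)) +
        ENNReal.ofReal (1 - l ^ ((σ - 1) / p))⁻¹ *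
          (ENNReal.ofReal (M ^ σ * (1 + l⁻¹)) * ∫⁻ t in Ioc 0 M, h t) ^ (1 / p) := by
  have hp₀ : 0 < p := by linarith
  have hρ₁ : l ^ ((σ - 1) / p) < 1 :=
    Real.rpow_lt_one hl₀.le hl₁ (div_pos (by linarith) hp₀)
  have htelescope := eLpNorm'_le_add_tsum_eLpNorm'_sub (ν := volume.restrict (Ioc 0 M)) hp
    (g := fun k t => f (l ^ k * t)) (a := fun _ => a)
    (fun k => (hf.comp_measurable (measurable_const_mul _)).aestronglyMeasurable)
    (ae_restrict_of_forall_mem measurableSet_Ioc fun t ht =>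
      tendsto_comp_pow_mul_of_tendsto_nhdsGT_zero hl₀ hl₁ hfa ht.1)
  rw [eLpNorm'_const _ hp₀, Measure.restrict_apply_univ, Real.volume_Ioc, sub_zero] at htelescope
  refine htelescope.trans (add_le_add (by simp) ?_)
  rw [← tsum_ofReal_pow (by positivity) hρ₁, ← ENNReal.tsum_mul_right]
  exact ENNReal.tsum_le_tsum fun k =>
    eLpNorm'_increment_comp_pow_mul_le hp₀ (by linarith) hl₀ hl₁.le hM hh hfh k

lemma ofReal_mul_enorm_limit_rpow_le (hp : 1 ≤ p) (hσ : 1 < σ) (hl₀ : 0 < l) (hl₁ : l < 1)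
    (hM : 0 ≤ M) (hf : StronglyMeasurable f) (hh : Measurable h)
    (hfa : Tendsto f (𝓝[>] 0) (𝓝 a)) (hfh : DominatesIncrements h f p σ l M) :
    ENNReal.ofReal M * ‖a‖ₑ ^ p ≤ 2 ^ (p - 1) * ((∫⁻ t in Ioc 0 M, ‖f t‖ₑ ^ p) +
      ENNReal.ofReal ((1 - l ^ ((σ - 1) / p))⁻¹ ^ p * (M ^ σ * (1 + l⁻¹))) *
        ∫⁻ t in Ioc 0 M, h t) := by
  have hp₀ : 0 < p := by linarith
  have hρ : 0 ≤ (1 - l ^ ((σ - 1) / p))⁻¹ :=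
    inv_nonneg.2 (sub_nonneg.2 (Real.rpow_le_one hl₀.le hl₁.le (div_nonneg (by linarith) hp₀.le)))
  have root_rpow : ∀ x : ℝ≥0∞, (x ^ (1 / p)) ^ p = x := fun x => by
    rw [one_div, ENNReal.rpow_inv_rpow hp₀.ne']
  calc ENNReal.ofReal M * ‖a‖ₑ ^ p = (‖a‖ₑ * ENNReal.ofReal M ^ (1 / p)) ^ p := by
        rw [ENNReal.mul_rpow_of_nonneg _ _ hp₀.le, root_rpow, mul_comm]
    _ ≤ _ := by
        gcongr
        exact enorm_limit_mul_rpow_le_eLpNorm'_add hp hσ hl₀ hl₁ hM hf hh hfa hfh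
    _ ≤ _ := ENNReal.rpow_add_le_mul_rpow_add_rpow _ _ hp
    _ = _ := by
        rw [← lintegral_rpow_enorm_eq_rpow_eLpNorm' hp₀, ENNReal.mul_rpow_of_nonneg _ _ hp₀.le,
          root_rpow, ENNReal.ofReal_rpow_of_nonneg hρ hp₀.le, ← mul_assoc,
          ← ENNReal.ofReal_mul (by positivity)]

lemma inv_one_sub_one_sub_rpow_le {γ x : ℝ} (hγ : 0 < γ) (hx₀ : 0 < x) (hx₁ : x < 1) :
    (1 - (1 - x) ^ γ)⁻¹ ≤ (min γ 1 * x)⁻¹ := by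
  have hmin : 0 < min γ 1 := lt_min hγ one_pos
  have hbernoulli : (1 - x) ^ γ ≤ 1 - min γ 1 * x :=
    calc (1 - x) ^ γ ≤ (1 - x) ^ min γ 1 :=
          Real.rpow_le_rpow_of_exponent_ge (by linarith) (by linarith) (min_le_left _ _)
      _ = (1 + -x) ^ min γ 1 := by rw [sub_eq_add_neg]
      _ ≤ 1 + min γ 1 * -x :=
          rpow_one_add_le_one_add_mul_self (by linarith) hmin.le (min_le_right _ _)
      _ = 1 - min γ 1 * x := by ring
  gcongr
  linarith

lemma inv_one_sub_one_sub_quarter_rpow_rpow_mul_le {γ ϑ : ℝ} (hp : 0 ≤ p) (hγ : 0 < γ)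
    (hϑ₀ : 0 < ϑ) (hϑ₁ : ϑ ≤ 1) :
    (1 - (1 - ϑ / 4) ^ γ)⁻¹ ^ p * (1 + (1 - ϑ / 4)⁻¹) ≤ 3 * (4 / min γ 1) ^ p * ϑ ^ (-p) := by
  have hratio_pos : 0 < 1 - ϑ / 4 := by linarith
  have hgap : 0 ≤ 1 - (1 - ϑ / 4) ^ γ :=
    sub_nonneg.2 (Real.rpow_le_one (by linarith) (by linarith) hγ.le)
  have hbernoulli : (1 - (1 - ϑ / 4) ^ γ)⁻¹ ≤ (min γ 1 * (ϑ / 4))⁻¹ :=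
    inv_one_sub_one_sub_rpow_le hγ (by linarith) (by linarith)
  have hratio : (1 - ϑ / 4)⁻¹ ≤ 2 := by
    rw [inv_le_comm₀ (by linarith) two_pos]
    linarith
  calc (1 - (1 - ϑ / 4) ^ γ)⁻¹ ^ p * (1 + (1 - ϑ / 4)⁻¹)
      ≤ (min γ 1 * (ϑ / 4))⁻¹ ^ p * (1 + 2) := by
        gcongr
    _ = 3 * (4 / min γ 1 * ϑ⁻¹) ^ p := by
        rw [show (min γ 1 * (ϑ / 4))⁻¹ = 4 / min γ 1 * ϑ⁻¹ by field_simp]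
        ring
    _ = 3 * (4 / min γ 1) ^ p * ϑ ^ (-p) := by
        rw [Real.mul_rpow (by positivity) (by positivity), Real.inv_rpow hϑ₀.le,
          Real.rpow_neg hϑ₀.le]
        ring

lemma enorm_limit_rpow_le {ϑ : ℝ} (hp : 1 ≤ p) (hσ : 1 < σ) (hM : 0 < M) (hϑ₀ : 0 < ϑ)
    (hϑ₁ : ϑ ≤ 1) (hf : StronglyMeasurable f) (hh : Measurable h)
    (hfa : Tendsto f (𝓝[>] 0) (𝓝 a)) (hfh : DominatesIncrements h f p σ (1 - ϑ / 4) M) :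
    ‖a‖ₑ ^ p ≤ 2 ^ (p - 1) * (ENNReal.ofReal M⁻¹ * (∫⁻ t in Ioc 0 M, ‖f t‖ₑ ^ p) +
      ENNReal.ofReal (3 * (4 / min ((σ - 1) / p) 1) ^ p * ϑ ^ (-p) * M ^ (σ - 1)) *
        ∫⁻ t in Ioc 0 M, h t) := by
  set l := 1 - ϑ / 4 with hl
  set γ := (σ - 1) / p
  have hγ : 0 < γ := div_pos (by linarith) (by linarith)
  have hconst : M⁻¹ * ((1 - l ^ γ)⁻¹ ^ p * (M ^ σ * (1 + l⁻¹))) ≤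
      3 * (4 / min γ 1) ^ p * ϑ ^ (-p) * M ^ (σ - 1) :=
    calc _ = (1 - l ^ γ)⁻¹ ^ p * (1 + l⁻¹) * M ^ (σ - 1) := by
          rw [Real.rpow_sub_one hM.ne']
          ring
      _ ≤ _ := by
          gcongr ?_ * M ^ (σ - 1)
          exact inv_one_sub_one_sub_quarter_rpow_rpow_mul_le (by linarith) hγ hϑ₀ hϑ₁
  calc ‖a‖ₑ ^ p = ENNReal.ofReal M⁻¹ * (ENNReal.ofReal M * ‖a‖ₑ ^ p) := by
        rw [← mul_assoc, ← ENNReal.ofReal_mul (by positivity), inv_mul_cancel₀ hM.ne',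
          ENNReal.ofReal_one, one_mul]
    _ ≤ ENNReal.ofReal M⁻¹ * (2 ^ (p - 1) * ((∫⁻ t in Ioc 0 M, ‖f t‖ₑ ^ p) +
          ENNReal.ofReal ((1 - l ^ γ)⁻¹ ^ p * (M ^ σ * (1 + l⁻¹))) * ∫⁻ t in Ioc 0 M, h t)) := by
        gcongr ENNReal.ofReal M⁻¹ * ?_
        exact ofReal_mul_enorm_limit_rpow_le hp hσ (by linarith) (by linarith) hM.le hf hh hfa hfh
    _ = 2 ^ (p - 1) * (ENNReal.ofReal M⁻¹ * (∫⁻ t in Ioc 0 M, ‖f t‖ₑ ^ p) +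
          ENNReal.ofReal (M⁻¹ * ((1 - l ^ γ)⁻¹ ^ p * (M ^ σ * (1 + l⁻¹)))) *
            ∫⁻ t in Ioc 0 M, h t) := by
        rw [ENNReal.ofReal_mul (p := M⁻¹) (by positivity)]
        ring
    _ ≤ _ := by gcongr

end HalfLine

lemma ofReal_norm_rpow {p : ℝ} (hp : 0 ≤ p) (a : F) : ENNReal.ofReal (‖a‖ ^ p) = ‖a‖ₑ ^ p := by
  rw [← ENNReal.ofReal_rpow_of_nonneg (norm_nonneg a) hp, ofReal_norm]

section Density

/-- The energy density at `(x, t)` of the nonlocal seminorm with horizon `τ * t`: the inner double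
integral of `stripeSemi`. The kernel exponent `β` is `d + p * s` in the application. -/
noncomputable def localEnergyDensity [PseudoMetricSpace E] [MeasurableSpace E] (μ : Measure E)
    (S : Set ℝ) (τ p β : ℝ) (u : E → ℝ → F) (x : E) (t : ℝ) : ℝ≥0∞ :=
  ∫⁻ y, (∫⁻ r in S ∩ {r : ℝ | dist y x ^ 2 + (r - t) ^ 2 < (τ * t) ^ 2},
    ENNReal.ofReal (‖u y r - u x t‖ ^ p / (τ * t) ^ β)) ∂μ

variable {S : Set ℝ} {τ p β t : ℝ} {u v : E → ℝ → F} {x : E}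

section Metric

variable [PseudoMetricSpace E] [MeasurableSpace E] {μ : Measure E}

lemma measurableSet_inter_sq_add_sq_lt (hS : MeasurableSet S) (ρ t R : ℝ) :
    MeasurableSet (S ∩ {r : ℝ | ρ ^ 2 + (r - t) ^ 2 < R ^ 2}) :=
  hS.inter (measurableSet_lt (by fun_prop) (by fun_prop))

lemma localEnergyDensity_congr (hS : MeasurableSet S) (huv : ∀ y, EqOn (u y) (v y) S)
    (ht : t ∈ S) :
    localEnergyDensity μ S τ p β u x t = localEnergyDensity μ S τ p β v x t :=
  lintegral_congr fun y => setLIntegral_congr_fun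
    (measurableSet_inter_sq_add_sq_lt hS _ _ _) fun r hr => by
      simp only [huv y hr.1, huv x ht]

variable [OpensMeasurableSpace E] [SecondCountableTopology E]

lemma measurable_uncurry_localEnergyDensity [SFinite μ] (hS : MeasurableSet S)
    (hu : StronglyMeasurable (uncurry u)) :
    Measurable (uncurry (localEnergyDensity μ S τ p β u)) := by
  set integrand : ((E × ℝ) × E) × ℝ → ℝ≥0∞ :=
    (Prod.snd ⁻¹' S ∩ {z | dist z.1.2 z.1.1.1 ^ 2 + (z.2 - z.1.1.2) ^ 2 <
      (τ * z.1.1.2) ^ 2}).indicator fun z => ENNReal.ofReal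
        (‖uncurry u (z.1.2, z.2) - uncurry u z.1.1‖ ^ p / (τ * z.1.1.2) ^ β)
  have hintegrand : Measurable integrand := by
    refine Measurable.indicator ?_
      ((measurable_snd hS).inter (measurableSet_lt (by fun_prop) (by fun_prop)))
    have hdiff : StronglyMeasurable fun z : ((E × ℝ) × E) × ℝ =>
        uncurry u (z.1.2, z.2) - uncurry u z.1.1 :=
      (hu.comp_measurable (by fun_prop)).sub (hu.comp_measurable (by fun_prop))
    exact ENNReal.measurable_ofReal.comp ((hdiff.norm.measurable.pow_const p).div (by fun_prop))
  have hdensity : uncurry (localEnergyDensity μ S τ p β u) =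
      fun q => ∫⁻ y, (∫⁻ r : ℝ, integrand ((q, y), r)) ∂μ := by
    ext ⟨x, t⟩
    refine lintegral_congr fun y => ?_
    rw [← lintegral_indicator (measurableSet_inter_sq_add_sq_lt hS _ _ _)]
    rfl
  rw [hdensity]
  exact hintegrand.lintegral_prod_right'.lintegral_prod_right'

end Metric

lemma setLIntegral_prod_enorm_sub_rpow_le [PseudoMetricSpace E] [MeasurableSpace E]
    {μ : Measure E} [SFinite μ] {B : Set E} {J : Set ℝ} (hp : 0 ≤ p) (hτ : 0 < τ * t)
    (hB : MeasurableSet B)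
    (hBJ : ∀ y ∈ B, J ⊆ S ∩ {r | dist y x ^ 2 + (r - t) ^ 2 < (τ * t) ^ 2}) :
    ∫⁻ z in B ×ˢ J, ‖u z.1 z.2 - u x t‖ₑ ^ p ∂μ.prod volume ≤
      ENNReal.ofReal ((τ * t) ^ β) * localEnergyDensity μ S τ p β u x t := by
  have hkernel : 0 < (τ * t) ^ β := Real.rpow_pos_of_pos hτ β
  have hintegrand : ∀ y r, ‖u y r - u x t‖ₑ ^ p =
      ENNReal.ofReal ((τ * t) ^ β) *
        ENNReal.ofReal (‖u y r - u x t‖ ^ p / (τ * t) ^ β) := fun y r => by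
    rw [← ENNReal.ofReal_mul hkernel.le, mul_div_cancel₀ _ hkernel.ne', ofReal_norm_rpow hp]
  rw [← Measure.prod_restrict, localEnergyDensity,
    ← lintegral_const_mul' _ _ ENNReal.ofReal_ne_top]
  calc _ ≤ ∫⁻ y in B, (∫⁻ r in J, ‖u y r - u x t‖ₑ ^ p) ∂μ := lintegral_prod_le _
    _ ≤ ∫⁻ y in B, ENNReal.ofReal ((τ * t) ^ β) *
          (∫⁻ r in S ∩ {r | dist y x ^ 2 + (r - t) ^ 2 < (τ * t) ^ 2},
            ENNReal.ofReal (‖u y r - u x t‖ ^ p / (τ * t) ^ β)) ∂μ := by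
        refine setLIntegral_mono' hB fun y hy => ?_
        simp only [hintegrand, lintegral_const_mul' _ _ ENNReal.ofReal_ne_top]
        gcongr
        exact hBJ y hy
    _ ≤ _ := setLIntegral_le_lintegral _ _

end Density

section Strip

lemma exists_stronglyMeasurable_uncurry_eqOn [MeasurableSpace E] {S : Set ℝ} (hS : MeasurableSet S)
    {u : E → ℝ → F} (hu : StronglyMeasurable ((Prod.snd ⁻¹' S).domRestrict (uncurry u))) :
    ∃ v : E → ℝ → F, StronglyMeasurable (uncurry v) ∧ ∀ x, EqOn (u x) (v x) S := by
  have hstrip : MeasurableSet (Prod.snd ⁻¹' S : Set (E × ℝ)) := measurable_snd hS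
  obtain ⟨w, hw, hwu⟩ := (MeasurableEmbedding.subtype_coe hstrip).exists_stronglyMeasurable_extend
    hu fun _ => ⟨0⟩
  exact ⟨curry w, by rwa [uncurry_curry], fun x t ht => (congrFun hwu ⟨(x, t), ht⟩).symm⟩

lemma tendsto_nhdsGT_zero_of_continuousOn_uncurry [TopologicalSpace E] {u : E → ℝ → F} {M : ℝ}
    (hM : 0 < M) (hu : ContinuousOn (uncurry u) (Prod.snd ⁻¹' Icc 0 M)) (x : E) :
    Tendsto (u x) (𝓝[>] 0) (𝓝 (u x 0)) := by
  have hslice : ContinuousOn (u x) (Icc 0 M) :=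
    hu.comp (Continuous.prodMk_right x).continuousOn fun t ht => ht
  have h₀ : Tendsto (u x) (𝓝[Icc 0 M] 0) (𝓝 (u x 0)) := hslice 0 (left_mem_Icc.2 hM.le)
  rw [← nhdsWithin_Ioc_eq_nhdsGT hM]
  exact h₀.mono_left (nhdsWithin_mono _ Ioc_subset_Icc_self)

end Strip

section Trace

lemma sq_dist_add_sq_sub_lt [PseudoMetricSpace E] {x y : E} {ϑ t r z : ℝ} (hϑ₀ : 0 < ϑ)
    (hϑ₁ : ϑ ≤ 1) (ht : 0 < t) (hy : y ∈ Metric.ball x (ϑ * t / 2))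
    (hr : r ∈ Icc ((1 - ϑ / 4) * t) t) (hz : z ∈ Icc ((1 - ϑ / 4) * t) t) :
    dist y x ^ 2 + (r - z) ^ 2 < (ϑ * z) ^ 2 := by
  have hρ : 0 < ϑ * t := mul_pos hϑ₀ ht
  have hhorizontal : dist y x ^ 2 ≤ (ϑ * t / 2) ^ 2 :=
    pow_le_pow_left₀ dist_nonneg (Metric.mem_ball.1 hy).le 2
  have hvertical : (r - z) ^ 2 ≤ (ϑ * t / 4) ^ 2 :=
    sq_le_sq' (by linarith [hr.1, hz.2]) (by linarith [hr.2, hz.1])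
  have hhorizon : (3 / 4 * (ϑ * t)) ^ 2 ≤ (ϑ * z) ^ 2 := by
    refine pow_le_pow_left₀ (by positivity) ?_ 2
    nlinarith [hz.1]
  nlinarith [mul_pos hρ hρ]

variable [NormedAddCommGroup E] [NormedSpace ℝ E] [FiniteDimensional ℝ E] [MeasurableSpace E]
  [BorelSpace E] {μ : Measure E} [μ.IsAddHaarMeasure]

lemma addHaar_prod_volume_ball_prod_Ioc {ϑ t : ℝ} (hϑ : 0 < ϑ) (ht : 0 < t) (x : E) :
    (μ.prod volume) (Metric.ball x (ϑ * t / 2) ×ˢ Ioc ((1 - ϑ / 4) * t) t) =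
      ENNReal.ofReal (μ.real (Metric.ball 0 1) / (4 * 2 ^ finrank ℝ E) *
        (ϑ * t) ^ (finrank ℝ E + 1)) := by
  rw [Measure.prod_prod, Real.volume_Ioc, μ.addHaar_ball_of_pos x (by positivity),
    ← ofReal_measureReal, ← ENNReal.ofReal_mul (by positivity),
    ← ENNReal.ofReal_mul (by positivity), div_pow]
  congr 1
  field_simp
  ring

variable {d : ℕ} {u : E → ℝ → F} {p s ϑ M : ℝ}

lemma addHaar_mul_enorm_increment_rpow_le (hp : 1 ≤ p) {β : ℝ} (hβ : 0 ≤ β) (hϑ₀ : 0 < ϑ)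
    (hϑ₁ : ϑ ≤ 1) (hu : StronglyMeasurable (uncurry u)) (x : E) {t : ℝ} (ht : t ∈ Ioc 0 M) :
    (μ.prod volume) (Metric.ball x (ϑ * t / 2) ×ˢ Ioc ((1 - ϑ / 4) * t) t) *
        ‖u x ((1 - ϑ / 4) * t) - u x t‖ₑ ^ p ≤
      2 ^ (p - 1) * (ENNReal.ofReal ((ϑ * t) ^ β) *
        (localEnergyDensity μ (Ioc 0 M) ϑ p β u x t +
          localEnergyDensity μ (Ioc 0 M) ϑ p β u x ((1 - ϑ / 4) * t))) := by
  set B := Metric.ball x (ϑ * t / 2)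
  set J := Ioc ((1 - ϑ / 4) * t) t
  have hl : 0 < (1 - ϑ / 4) * t := mul_pos (by linarith) ht.1
  have hlt : (1 - ϑ / 4) * t ≤ t := mul_le_of_le_one_left ht.1.le (by linarith)
  have hsub : ∀ z ∈ Icc ((1 - ϑ / 4) * t) t, ∀ y ∈ B,
      J ⊆ Ioc 0 M ∩ {r | dist y x ^ 2 + (r - z) ^ 2 < (ϑ * z) ^ 2} := fun z hz y hy r hr =>
    ⟨⟨hl.trans hr.1, hr.2.trans ht.2⟩,
      sq_dist_add_sq_sub_lt hϑ₀ hϑ₁ ht.1 hy (Ioc_subset_Icc_self hr) hz⟩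
  have hbound : ∀ z ∈ Icc ((1 - ϑ / 4) * t) t,
      ∫⁻ q in B ×ˢ J, ‖u q.1 q.2 - u x z‖ₑ ^ p ∂μ.prod volume ≤
        ENNReal.ofReal ((ϑ * t) ^ β) * localEnergyDensity μ (Ioc 0 M) ϑ p β u x z :=
    fun z hz => by
      have hz₀ : 0 < z := hl.trans_le hz.1
      refine (setLIntegral_prod_enorm_sub_rpow_le (β := β) (by linarith) (mul_pos hϑ₀ hz₀)
        Metric.isOpen_ball.measurableSet (hsub z hz)).trans ?_
      gcongr
      exact hz.2
  calc _ = (μ.prod volume).restrict (B ×ˢ J) univ * ‖u x ((1 - ϑ / 4) * t) - u x t‖ₑ ^ p := by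
        rw [Measure.restrict_apply_univ]
    _ ≤ 2 ^ (p - 1) * (∫⁻ q in B ×ˢ J, ‖u q.1 q.2 - u x ((1 - ϑ / 4) * t)‖ₑ ^ p ∂μ.prod volume +
          ∫⁻ q in B ×ˢ J, ‖u q.1 q.2 - u x t‖ₑ ^ p ∂μ.prod volume) :=
        measure_univ_mul_enorm_sub_rpow_le hp hu.aestronglyMeasurable _ _
    _ ≤ _ := by
        rw [mul_add (ENNReal.ofReal _), add_comm]
        gcongr
        exacts [hbound t ⟨hlt, le_rfl⟩, hbound _ ⟨le_rfl, hlt⟩]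

variable (μ) in
lemma exists_dominatesIncrements_localEnergyDensity (hd : finrank ℝ E + 1 = d) (hp : 1 ≤ p)
    (hps : 0 ≤ p * s) :
    ∃ A : ℝ, 0 < A ∧ ∀ {M ϑ : ℝ}, 0 < ϑ → ϑ ≤ 1 → ∀ {u : E → ℝ → F},
      StronglyMeasurable (uncurry u) → ∀ x, DominatesIncrements
        (fun t => ENNReal.ofReal (A * ϑ ^ (p * s)) *
          localEnergyDensity μ (Ioc 0 M) ϑ p (d + p * s) u x t) (u x) p (p * s) (1 - ϑ / 4) M := by
  set c := μ.real (Metric.ball 0 1) / (4 * 2 ^ finrank ℝ E)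
  have hc : 0 < c := div_pos
    (ENNReal.toReal_pos (Metric.measure_ball_pos μ 0 one_pos).ne' measure_ball_lt_top.ne)
    (by positivity)
  refine ⟨2 ^ (p - 1) / c, by positivity, fun {M ϑ} hϑ₀ hϑ₁ {u} hu x t ht => ?_⟩
  set D := localEnergyDensity μ (Ioc 0 M) ϑ p (d + p * s) u x
  have hρ : 0 < ϑ * t := mul_pos hϑ₀ ht.1
  have hvol : 0 < c * (ϑ * t) ^ d := by positivity
  have hscale : (c * (ϑ * t) ^ d)⁻¹ * (2 ^ (p - 1) * (ϑ * t) ^ (d + p * s)) =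
      t ^ (p * s) * (2 ^ (p - 1) / c * ϑ ^ (p * s)) := by
    rw [Real.rpow_add hρ, Real.rpow_natCast, Real.mul_rpow hϑ₀.le ht.1.le]
    field_simp
  have haverage := addHaar_mul_enorm_increment_rpow_le (μ := μ) hp
    (β := d + p * s) (by positivity) hϑ₀ hϑ₁ hu x ht
  rw [addHaar_prod_volume_ball_prod_Ioc hϑ₀ ht.1, hd] at haverage
  calc ‖u x ((1 - ϑ / 4) * t) - u x t‖ₑ ^ p
      = ENNReal.ofReal (c * (ϑ * t) ^ d)⁻¹ *
          (ENNReal.ofReal (c * (ϑ * t) ^ d) * ‖u x ((1 - ϑ / 4) * t) - u x t‖ₑ ^ p) := by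
        rw [← mul_assoc, ← ENNReal.ofReal_mul (by positivity), inv_mul_cancel₀ hvol.ne',
          ENNReal.ofReal_one, one_mul]
    _ ≤ ENNReal.ofReal (c * (ϑ * t) ^ d)⁻¹ * (2 ^ (p - 1) *
          (ENNReal.ofReal ((ϑ * t) ^ (d + p * s)) * (D t + D ((1 - ϑ / 4) * t)))) := by
        gcongr
    _ = ENNReal.ofReal ((c * (ϑ * t) ^ d)⁻¹ * (2 ^ (p - 1) * (ϑ * t) ^ (d + p * s))) *
          (D t + D ((1 - ϑ / 4) * t)) := by
        rw [ENNReal.ofReal_mul (by positivity), ENNReal.ofReal_mul (by positivity),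
          ← ENNReal.ofReal_rpow_of_pos two_pos, ENNReal.ofReal_ofNat]
        ring
    _ = _ := by
        rw [hscale, ENNReal.ofReal_mul (by have := ht.1; positivity)]
        ring

variable (μ) in
lemma exists_enorm_limit_rpow_le (hd : finrank ℝ E + 1 = d) (hp : 1 ≤ p) (hsp : 1 < s * p) :
    ∃ C : ℝ, 0 < C ∧ ∀ {M ϑ : ℝ}, 0 < M → 0 < ϑ → ϑ ≤ 1 → ∀ {u : E → ℝ → F},
      StronglyMeasurable (uncurry u) → ∀ {x : E} {a : F}, Tendsto (u x) (𝓝[>] 0) (𝓝 a) →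
      ‖a‖ₑ ^ p ≤ ENNReal.ofReal C * (ENNReal.ofReal M⁻¹ * (∫⁻ t in Ioc 0 M, ‖u x t‖ₑ ^ p) +
        ENNReal.ofReal (ϑ ^ (p * s - p) * M ^ (p * s - 1)) *
          ∫⁻ t in Ioc 0 M, localEnergyDensity μ (Ioc 0 M) ϑ p (d + p * s) u x t) := by
  rw [mul_comm] at hsp
  obtain ⟨A, hA, hdom⟩ := exists_dominatesIncrements_localEnergyDensity (F := F) μ hd hp
    (s := s) (by linarith)
  set B := 3 * (4 / min ((p * s - 1) / p) 1) ^ p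
  have hB : 0 ≤ B := by
    have : 0 < (p * s - 1) / p := div_pos (by linarith) (by linarith)
    positivity
  refine ⟨2 ^ (p - 1) * (1 + B * A), by positivity,
    fun {M ϑ} hM hϑ₀ hϑ₁ {u} hu {x a} hlim => ?_⟩
  set D := localEnergyDensity μ (Ioc 0 M) ϑ p (d + p * s) u x
  set L := ENNReal.ofReal M⁻¹ * ∫⁻ t in Ioc 0 M, ‖u x t‖ₑ ^ p
  set G := ENNReal.ofReal (ϑ ^ (p * s - p) * M ^ (p * s - 1)) * ∫⁻ t in Ioc 0 M, D t
  have hD : Measurable D :=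
    (measurable_uncurry_localEnergyDensity measurableSet_Ioc hu).of_uncurry_left
  have hscale : B * ϑ ^ (-p) * M ^ (p * s - 1) * (A * ϑ ^ (p * s)) =
      B * A * (ϑ ^ (p * s - p) * M ^ (p * s - 1)) := by
    rw [sub_eq_add_neg (p * s) p, Real.rpow_add hϑ₀]
    ring
  calc ‖a‖ₑ ^ p ≤ 2 ^ (p - 1) * (L + ENNReal.ofReal (B * ϑ ^ (-p) * M ^ (p * s - 1)) *
          ∫⁻ t in Ioc 0 M, ENNReal.ofReal (A * ϑ ^ (p * s)) * D t) :=
        enorm_limit_rpow_le hp hsp hM hϑ₀ hϑ₁ hu.of_uncurry_left (hD.const_mul _) hlim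
          (hdom hϑ₀ hϑ₁ hu x)
    _ = 2 ^ (p - 1) * (L + ENNReal.ofReal (B * A) * G) := by
        rw [lintegral_const_mul' _ _ ENNReal.ofReal_ne_top, ← mul_assoc,
          ← ENNReal.ofReal_mul (by positivity), hscale, ENNReal.ofReal_mul (by positivity),
          mul_assoc]
    _ ≤ 2 ^ (p - 1) * (ENNReal.ofReal (1 + B * A) * L + ENNReal.ofReal (1 + B * A) * G) := by
        gcongr
        · exact le_mul_of_one_le_left' (ENNReal.one_le_ofReal.2 (by nlinarith))
        · linarith
    _ = _ := by
        rw [ENNReal.ofReal_mul (by positivity), ← ENNReal.ofReal_rpow_of_pos two_pos,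
          ENNReal.ofReal_ofNat]
        ring

variable (μ) in
lemma exists_lintegral_enorm_trace_rpow_le (hd : finrank ℝ E + 1 = d) (hp : 1 ≤ p)
    (hsp : 1 < s * p) :
    ∃ C : ℝ, 0 < C ∧ ∀ {M ϑ : ℝ}, 0 < M → 0 < ϑ → ϑ ≤ 1 → ∀ {u : E → ℝ → F},
      StronglyMeasurable (uncurry u) → ∀ {g : E → F},
      (∀ᵐ x ∂μ, Tendsto (u x) (𝓝[>] 0) (𝓝 (g x))) →
      ∫⁻ x, ‖g x‖ₑ ^ p ∂μ ≤ ENNReal.ofReal C *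
        (ENNReal.ofReal M⁻¹ * ∫⁻ x, (∫⁻ t in Ioc 0 M, ‖u x t‖ₑ ^ p) ∂μ +
          ENNReal.ofReal (ϑ ^ (p * s - p) * M ^ (p * s - 1)) *
            ∫⁻ x, (∫⁻ t in Ioc 0 M, localEnergyDensity μ (Ioc 0 M) ϑ p (d + p * s) u x t) ∂μ) := by
  obtain ⟨C, hC, hpointwise⟩ := exists_enorm_limit_rpow_le (F := F) μ hd hp hsp
  refine ⟨C, hC, fun {M ϑ} hM hϑ₀ hϑ₁ {u} hu {g} hlim => ?_⟩
  have hmeas : Measurable fun x => ∫⁻ t in Ioc 0 M, ‖u x t‖ₑ ^ p :=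
    (hu.enorm.pow_const p).lintegral_prod_right'
  refine (lintegral_mono_ae (hlim.mono fun x hx => hpointwise hM hϑ₀ hϑ₁ hu hx)).trans_eq ?_
  rw [lintegral_const_mul' _ _ ENNReal.ofReal_ne_top, lintegral_add_left (hmeas.const_mul _),
    lintegral_const_mul' _ _ ENNReal.ofReal_ne_top, lintegral_const_mul' _ _ ENNReal.ofReal_ne_top]

variable (μ) in
theorem stmt_12_general (hd : finrank ℝ E + 1 = d) (hp : 1 ≤ p) (hsp : 1 < s * p) :
    ∃ C : ℝ, 0 < C ∧ ∀ {M ϑ : ℝ}, 0 < M → 0 < ϑ → ϑ ≤ 1 → ∀ {u : E → ℝ → F},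
      StronglyMeasurable ((Prod.snd ⁻¹' Ioc 0 M).domRestrict (uncurry u)) → ∀ {g : E → F},
      (∀ᵐ x ∂μ, Tendsto (u x) (𝓝[>] 0) (𝓝 (g x))) →
      ∫⁻ x, ‖g x‖ₑ ^ p ∂μ ≤ ENNReal.ofReal C *
        (ENNReal.ofReal M⁻¹ * ∫⁻ x, (∫⁻ t in Ioc 0 M, ‖u x t‖ₑ ^ p) ∂μ +
          ENNReal.ofReal (ϑ ^ (p * s - p) * M ^ (p * s - 1)) *
            ∫⁻ x, (∫⁻ t in Ioc 0 M, localEnergyDensity μ (Ioc 0 M) ϑ p (d + p * s) u x t) ∂μ) := by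
  obtain ⟨C, hC, htrace⟩ := exists_lintegral_enorm_trace_rpow_le (F := F) μ hd hp hsp
  refine ⟨C, hC, fun {M ϑ} hM hϑ₀ hϑ₁ {u} hu {g} hlim => ?_⟩
  obtain ⟨v, hv, huv⟩ := exists_stronglyMeasurable_uncurry_eqOn measurableSet_Ioc hu
  have hlim_v : ∀ᵐ x ∂μ, Tendsto (v x) (𝓝[>] 0) (𝓝 (g x)) := hlim.mono fun x hx =>
    hx.congr' ((huv x).eventuallyEq_of_mem (Ioc_mem_nhdsGT hM))
  have hLp : ∀ x, ∫⁻ t in Ioc 0 M, ‖u x t‖ₑ ^ p = ∫⁻ t in Ioc 0 M, ‖v x t‖ₑ ^ p := fun x =>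
    setLIntegral_congr_fun measurableSet_Ioc fun t ht => by simp only [huv x ht]
  have henergy : ∀ x, ∫⁻ t in Ioc 0 M, localEnergyDensity μ (Ioc 0 M) ϑ p (d + p * s) u x t =
      ∫⁻ t in Ioc 0 M, localEnergyDensity μ (Ioc 0 M) ϑ p (d + p * s) v x t := fun x =>
    setLIntegral_congr_fun measurableSet_Ioc fun t ht =>
      localEnergyDensity_congr measurableSet_Ioc huv ht
  simpa only [hLp, henergy] using htrace hM hϑ₀ hϑ₁ hv hlim_v

end Trace

end StripeTrace

/-- `L^p` bound for the trace on `Γ = ℝ^{d-1} × {0}` of a Lipschitz function on the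
stripe `ℝ^{d-1} × (0,M]`, with a constant independent of `M` and `ϑ`. -/
theorem stmt_12 (d : ℕ) (hd : 2 ≤ d) (p s : ℝ) (hp : 1 ≤ p) (hs0 : 0 < s)
    (hs1 : s ≤ 1) (hsp : 1 < s * p) :
    ∃ C : ℝ, 0 < C ∧ ∀ (M : ℝ), 0 < M → ∀ (ϑ : ℝ), 0 < ϑ → ϑ ≤ 1 →
      ∀ (u : EuclideanSpace ℝ (Fin (d - 1)) → ℝ → ℝ) (K : NNReal),
        LipschitzOnWith K (fun q : EuclideanSpace ℝ (Fin (d - 1)) × ℝ => u q.1 q.2)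
          {q : EuclideanSpace ℝ (Fin (d - 1)) × ℝ | q.2 ∈ Set.Icc 0 M} →
        stripeSemi d (Set.Ioc 0 M) ϑ p s u ≠ ⊤ →
        (∫⁻ x' : EuclideanSpace ℝ (Fin (d - 1)), ENNReal.ofReal (|u x' 0| ^ p)) ≤
          ENNReal.ofReal C *
            (ENNReal.ofReal M⁻¹ * stripeLp d (Set.Ioc 0 M) p u +
              ENNReal.ofReal (ϑ ^ (p * s - p) * M ^ (p * s - 1)) *
                stripeSemi d (Set.Ioc 0 M) ϑ p s u) := by
  have hdim : Module.finrank ℝ (EuclideanSpace ℝ (Fin (d - 1))) + 1 = d := by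
    rw [finrank_euclideanSpace_fin]
    omega
  obtain ⟨C, hC, htrace⟩ := stmt_12_general (F := ℝ)
    (volume : Measure (EuclideanSpace ℝ (Fin (d - 1)))) hdim hp hsp
  refine ⟨C, hC, fun M hM ϑ hϑ₀ hϑ₁ u K hu _ => ?_⟩
  have hmeas := ((hu.continuousOn.mono
    (Set.preimage_mono Set.Ioc_subset_Icc_self)).domRestrict).stronglyMeasurable
  have hlim := tendsto_nhdsGT_zero_of_continuousOn_uncurry hM hu.continuousOn
  have hbound := htrace hM hϑ₀ hϑ₁ hmeas (Filter.Eventually.of_forall hlim)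
  simp only [← ofReal_norm_rpow (zero_le_one.trans hp), Real.norm_eq_abs] at hbound
  exact hbound
end
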